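/- arXiv:2507.19235 — 2 statements merged into one kernel-verified Lean document; each statement's English description precedes it below -/
import Mathlib

section
/- Let G=(V,p,μ) be a weighted graph with bounded geometry with constant α>0 satisfying CD(0,n) for some positive integer n. Then there exists a constant C_DV>0, depending only on n and α, such that μ(B(x,2r)) ≤ C_DV · μ(B(x,r)) for all x∈V and all r>0. -/
/-- A weighted graph `G = (V, p, μ)`: a nonnegative kernel `p` and a positive
measure `μ` on the vertex set `V`, such that `G` is locally finite, `p` is a
Markov kernel, and `G` is connected.  Vertices `x, y` are neighbours (`x ∼ y`)
iff `0 < p x y`. -/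
structure WeightedGraph (V : Type*) where
  p : V → V → ℝ
  μ : V → ℝ
  p_nonneg : ∀ x y, 0 ≤ p x y
  μ_pos : ∀ x, 0 < μ x
  locallyFinite : ∀ x, {y | 0 < p x y}.Finite
  markov : ∀ x, HasSum (p x) 1
  connected : ∀ x y : V, ∃ n : ℕ, ∃ c : Fin (n + 1) → V,
      c 0 = x ∧ c (Fin.last n) = y ∧ ∀ i : Fin n, 0 < p (c i.castSucc) (c i.succ)

namespace WeightedGraph

variable {V : Type*} (G : WeightedGraph V)

/-- The Laplacian `Δ f (x) = ∑_{y ∼ x} p x y * (f y - f x)`.  (Summing over all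
of `V` is the same, since `p x y = 0` unless `y ∼ x`.) -/
noncomputable def lap (f : V → ℝ) (x : V) : ℝ := ∑' y, G.p x y * (f y - f x)

/-- The carré du champ `Γ f (x) = (1/2) ∑_{y ∼ x} p x y * (f y - f x)^2`. -/
noncomputable def gamma (f : V → ℝ) (x : V) : ℝ := (1 / 2) * ∑' y, G.p x y * (f y - f x) ^ 2

/-- The bilinear carré du champ
`Γ(f,g)(x) = (1/2) ∑_{y ∼ x} p x y * (f y - f x) * (g y - g x)`. -/
noncomputable def gammaBil (f g : V → ℝ) (x : V) : ℝ :=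
  (1 / 2) * ∑' y, G.p x y * (f y - f x) * (g y - g x)

/-- The iterated carré du champ `Γ₂ f = (1/2) Δ (Γ f) - Γ(f, Δ f)`. -/
noncomputable def gamma2 (f : V → ℝ) (x : V) : ℝ :=
  (1 / 2) * G.lap (G.gamma f) x - G.gammaBil f (G.lap f) x

/-- Bounded geometry with constant `α > 0`: the uniform ellipticity condition (A1)
`p x y ≥ α` whenever `x ∼ y`, and the reversibility condition (A2)
`p x y * μ x = p y x * μ y`. -/
def BoundedGeometry (α : ℝ) : Prop :=
  0 < α ∧ (∀ x y, 0 < G.p x y → α ≤ G.p x y) ∧ ∀ x y, G.p x y * G.μ x = G.p y x * G.μ y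

/-- The Bakry–Émery curvature-dimension condition `CD(K, n)`:
`Γ₂ f ≥ (1/n) (Δ f)² + K Γ f`. -/
def CD (K : ℝ) (n : ℕ) : Prop :=
  ∀ f : V → ℝ, ∀ x : V, (1 / (n : ℝ)) * G.lap f x ^ 2 + K * G.gamma f x ≤ G.gamma2 f x

/-- The Bakry–Émery curvature-dimension condition `CD(K, ∞)`: `Γ₂ f ≥ K Γ f`. -/
def CDInfty (K : ℝ) : Prop :=
  ∀ f : V → ℝ, ∀ x : V, K * G.gamma f x ≤ G.gamma2 f x

/-- The graph distance `d(x,y)`: the least length of a path of consecutive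
neighbours joining `x` to `y` (and `0` if `x = y`). -/
noncomputable def dist (x y : V) : ℕ :=
  sInf {n : ℕ | ∃ c : Fin (n + 1) → V,
    c 0 = x ∧ c (Fin.last n) = y ∧ ∀ i : Fin n, 0 < G.p (c i.castSucc) (c i.succ)}

/-- The measure `μ(B(x,r)) = ∑_{y : d(x,y) ≤ r} μ y` of the closed ball `B(x,r)`. -/
noncomputable def ballMeasure (x : V) (r : ℝ) : ℝ :=
  ∑' y : {y : V // (G.dist x y : ℝ) ≤ r}, G.μ y

end WeightedGraph

/-- The sup norm `‖f‖_∞ = sup_x |f x|` of a (bounded) function on `V`. -/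
noncomputable def supNorm {V : Type*} (f : V → ℝ) : ℝ := ⨆ x, |f x|

/-!
Let `u` solve `∂ₜ u = Δ u + Γ u`, in explicit Euler steps, starting from a tent over `B(x, r)` of
small slope and bounded height. As long as `u` is `1/2`-Lipschitz along edges, `CD(0, n)` makes the
maximum of `Γ u + (2 t / n) ((Δ u)⁻)²` nonincreasing up to the discretisation error. By ellipticity
this keeps `u` Lipschitz along edges, and it bounds `(Δ u)⁻` by `O(t^(-1/2))`, so that the value at
`x` drops slowly. `CD(0, n)` also gives the Li–Yau inequality `Δ u ≥ -n / (2 t)`, whose integrated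
form, a Harnack inequality, spreads the height at `x` to all of `B(x, 2 r)`. Finally
`∑ μ (exp (3 u) - 1)` does not increase along the flow, which bounds `μ(B(x, 2 r))` by a multiple of
`μ(B(x, r))`. The slope is small only for large `r`; bounded radii are handled by ellipticity alone.
-/

namespace WeightedGraph

variable {V : Type*} {G : WeightedGraph V}

/-! ### Sums over neighbours -/

/-- The neighbours of `x` as a finset, so that the sums defining `Δ`, `Γ` and `Γ(·,·)` become
finite sums. -/
noncomputable def neighborFinset (G : WeightedGraph V) (x : V) : Finset V :=
  (G.locallyFinite x).toFinset

lemma mem_neighborFinset {x y : V} : y ∈ G.neighborFinset x ↔ 0 < G.p x y := by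
  simp [neighborFinset]

lemma p_eq_zero_of_notMem {x y : V} (hy : y ∉ G.neighborFinset x) : G.p x y = 0 :=
  le_antisymm (not_lt.mp (mem_neighborFinset.not.mp hy)) (G.p_nonneg x y)

lemma sum_p_neighborFinset (x : V) : ∑ y ∈ G.neighborFinset x, G.p x y = 1 := by
  rw [← (G.markov x).tsum_eq]
  exact (tsum_eq_sum fun y hy => p_eq_zero_of_notMem hy).symm

lemma lap_eq_sum (f : V → ℝ) (x : V) :
    G.lap f x = ∑ y ∈ G.neighborFinset x, G.p x y * (f y - f x) :=
  tsum_eq_sum fun y hy => by rw [p_eq_zero_of_notMem hy, zero_mul]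

lemma gamma_eq_sum (f : V → ℝ) (x : V) :
    G.gamma f x = (1 / 2) * ∑ y ∈ G.neighborFinset x, G.p x y * (f y - f x) ^ 2 := by
  rw [gamma, tsum_eq_sum fun y hy => by rw [p_eq_zero_of_notMem hy, zero_mul]]

lemma gammaBil_eq_sum (f g : V → ℝ) (x : V) :
    G.gammaBil f g x =
      (1 / 2) * ∑ y ∈ G.neighborFinset x, G.p x y * (f y - f x) * (g y - g x) := by
  rw [gammaBil, tsum_eq_sum fun y hy => by rw [p_eq_zero_of_notMem hy, zero_mul, zero_mul]]

lemma sum_p_mul_le {x : V} {f : V → ℝ} {c : ℝ} (h : ∀ y, 0 < G.p x y → f y ≤ c) :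
    ∑ y ∈ G.neighborFinset x, G.p x y * f y ≤ c :=
  calc ∑ y ∈ G.neighborFinset x, G.p x y * f y
      ≤ ∑ y ∈ G.neighborFinset x, G.p x y * c := Finset.sum_le_sum fun y hy =>
        mul_le_mul_of_nonneg_left (h y (mem_neighborFinset.mp hy)) (G.p_nonneg x y)
    _ = c := by rw [← Finset.sum_mul, sum_p_neighborFinset, one_mul]

lemma le_sum_p_mul {x : V} {f : V → ℝ} {c : ℝ} (h : ∀ y, 0 < G.p x y → c ≤ f y) :
    c ≤ ∑ y ∈ G.neighborFinset x, G.p x y * f y :=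
  calc c = ∑ y ∈ G.neighborFinset x, G.p x y * c := by
        rw [← Finset.sum_mul, sum_p_neighborFinset, one_mul]
    _ ≤ ∑ y ∈ G.neighborFinset x, G.p x y * f y := Finset.sum_le_sum fun y hy =>
        mul_le_mul_of_nonneg_left (h y (mem_neighborFinset.mp hy)) (G.p_nonneg x y)

/-! ### Calculus of the Laplacian and the carré du champ -/

lemma lap_add (f g : V → ℝ) : G.lap (f + g) = G.lap f + G.lap g := by
  ext x
  simp only [lap_eq_sum, Pi.add_apply, ← Finset.sum_add_distrib]
  exact Finset.sum_congr rfl fun y _ => by ring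

lemma lap_smul (c : ℝ) (f : V → ℝ) : G.lap (c • f) = c • G.lap f := by
  ext x
  simp only [lap_eq_sum, Pi.smul_apply, smul_eq_mul, Finset.mul_sum]
  exact Finset.sum_congr rfl fun y _ => by ring

lemma gammaBil_add_right (u f g : V → ℝ) :
    G.gammaBil u (f + g) = G.gammaBil u f + G.gammaBil u g := by
  ext x
  simp only [gammaBil_eq_sum, Pi.add_apply, ← mul_add, ← Finset.sum_add_distrib]
  congr 1
  exact Finset.sum_congr rfl fun y _ => by ring

lemma gammaBil_smul_right (u : V → ℝ) (c : ℝ) (f : V → ℝ) :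
    G.gammaBil u (c • f) = c • G.gammaBil u f := by
  ext x
  simp only [gammaBil_eq_sum, Pi.smul_apply, smul_eq_mul, Finset.mul_sum]
  exact Finset.sum_congr rfl fun y _ => by ring

lemma gamma_add_smul (u w : V → ℝ) (τ : ℝ) :
    G.gamma (u + τ • w) = G.gamma u + (2 * τ) • G.gammaBil u w + τ ^ 2 • G.gamma w := by
  ext x
  simp only [gamma_eq_sum, gammaBil_eq_sum, Pi.add_apply, Pi.smul_apply, smul_eq_mul,
    Finset.mul_sum, ← Finset.sum_add_distrib]
  exact Finset.sum_congr rfl fun y _ => by ring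

lemma p_mul_sq_le_two_mul_gamma (u : V → ℝ) (x y : V) :
    G.p x y * (u y - u x) ^ 2 ≤ 2 * G.gamma u x := by
  have hterm : ∀ z ∈ G.neighborFinset x, 0 ≤ G.p x z * (u z - u x) ^ 2 :=
    fun z _ => mul_nonneg (G.p_nonneg x z) (sq_nonneg _)
  rw [gamma_eq_sum, ← mul_assoc, mul_one_div_cancel two_ne_zero, one_mul]
  by_cases hy : y ∈ G.neighborFinset x
  · exact Finset.single_le_sum hterm hy
  · rw [p_eq_zero_of_notMem hy, zero_mul]
    exact Finset.sum_nonneg hterm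

lemma gamma_nonneg (u : V → ℝ) (x : V) : 0 ≤ G.gamma u x := by
  simpa using p_mul_sq_le_two_mul_gamma (G := G) u x x

lemma lap_sq_le_two_mul_gamma (u : V → ℝ) (x : V) : G.lap u x ^ 2 ≤ 2 * G.gamma u x := by
  have hvar : 0 ≤ ∑ y ∈ G.neighborFinset x, G.p x y * (u y - u x - G.lap u x) ^ 2 :=
    Finset.sum_nonneg fun y _ => mul_nonneg (G.p_nonneg x y) (sq_nonneg _)
  have hexpand : ∑ y ∈ G.neighborFinset x, G.p x y * (u y - u x - G.lap u x) ^ 2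
      = ∑ y ∈ G.neighborFinset x, G.p x y * (u y - u x) ^ 2
        - 2 * G.lap u x * ∑ y ∈ G.neighborFinset x, G.p x y * (u y - u x)
        + G.lap u x ^ 2 * ∑ y ∈ G.neighborFinset x, G.p x y := by
    rw [Finset.mul_sum, Finset.mul_sum, ← Finset.sum_sub_distrib, ← Finset.sum_add_distrib]
    exact Finset.sum_congr rfl fun y _ => by ring
  rw [sum_p_neighborFinset, ← lap_eq_sum] at hexpand
  rw [gamma_eq_sum]
  linarith

lemma CD.lap_sq_div_le_gamma2 {n : ℕ} (hCD : G.CD 0 n) (u : V → ℝ) (x : V) :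
    G.lap u x ^ 2 / n ≤ G.gamma2 u x := by
  have h := hCD u x
  rwa [zero_mul, add_zero, one_div_mul_eq_div] at h

lemma CD.gamma2_nonneg {n : ℕ} (hCD : G.CD 0 n) (u : V → ℝ) (x : V) : 0 ≤ G.gamma2 u x :=
  (by positivity : 0 ≤ G.lap u x ^ 2 / n).trans (hCD.lap_sq_div_le_gamma2 u x)

/-! ### Functions with bounded increments along edges -/

/-- `u` is `c`-Lipschitz along the edges of `G`: neighbouring values differ by at most `c`. -/
def EdgeLipschitz (G : WeightedGraph V) (c : ℝ) (u : V → ℝ) : Prop :=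
  ∀ x y, 0 < G.p x y → |u y - u x| ≤ c

namespace EdgeLipschitz

variable {c : ℝ} {u : V → ℝ}

lemma lap_le (hu : G.EdgeLipschitz c u) (x : V) : G.lap u x ≤ c := by
  rw [lap_eq_sum]
  exact sum_p_mul_le fun y hy => (abs_le.mp (hu x y hy)).2

lemma neg_le_lap (hu : G.EdgeLipschitz c u) (x : V) : -c ≤ G.lap u x := by
  rw [lap_eq_sum]
  exact le_sum_p_mul fun y hy => (abs_le.mp (hu x y hy)).1

lemma gamma_le (hu : G.EdgeLipschitz c u) (x : V) : G.gamma u x ≤ c ^ 2 / 2 := by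
  have hsum : ∑ y ∈ G.neighborFinset x, G.p x y * (u y - u x) ^ 2 ≤ c ^ 2 :=
    sum_p_mul_le fun y hy => sq_le_sq' (abs_le.mp (hu x y hy)).1 (abs_le.mp (hu x y hy)).2
  rw [gamma_eq_sum]
  linarith

end EdgeLipschitz

/-- Uniform ellipticity, condition (A1) of bounded geometry. -/
def IsElliptic (G : WeightedGraph V) (α : ℝ) : Prop :=
  ∀ x y, 0 < G.p x y → α ≤ G.p x y

/-- Reversibility of `p` with respect to `μ`, condition (A2) of bounded geometry. -/
def IsReversible (G : WeightedGraph V) : Prop :=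
  ∀ x y, G.p x y * G.μ x = G.p y x * G.μ y

lemma IsReversible.p_pos_symm (hrev : G.IsReversible) {x y : V} (h : 0 < G.p x y) :
    0 < G.p y x :=
  pos_of_mul_pos_left (hrev x y ▸ mul_pos h (G.μ_pos x)) (G.μ_pos y).le

lemma IsElliptic.le_one [Nonempty V] {α : ℝ} (hell : G.IsElliptic α) : α ≤ 1 := by
  obtain ⟨x⟩ := ‹Nonempty V›
  obtain ⟨y, hy⟩ : (G.neighborFinset x).Nonempty :=
    Finset.nonempty_of_sum_ne_zero ((sum_p_neighborFinset x).trans_ne one_ne_zero)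
  calc α ≤ G.p x y := hell x y (mem_neighborFinset.mp hy)
    _ ≤ 1 := le_hasSum (G.markov x) y fun z _ => G.p_nonneg x z

lemma IsElliptic.mul_sq_le_two_mul_gamma {α : ℝ} (hell : G.IsElliptic α) (u : V → ℝ) {x y : V}
    (hxy : x = y ∨ 0 < G.p x y) : α * (u y - u x) ^ 2 ≤ 2 * G.gamma u x := by
  rcases hxy with rfl | hxy
  · simpa using gamma_nonneg u x
  · exact (mul_le_mul_of_nonneg_right (hell x y hxy) (sq_nonneg _)).trans
      (p_mul_sq_le_two_mul_gamma u x y)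

lemma IsElliptic.edgeLipschitz_of_gamma_le {α c : ℝ} (hα : 0 < α) (hell : G.IsElliptic α)
    (hc : 0 ≤ c) {u : V → ℝ} (hu : ∀ x, G.gamma u x ≤ α * c ^ 2 / 2) :
    G.EdgeLipschitz c u := by
  intro x y hxy
  have hsq : α * (u y - u x) ^ 2 ≤ α * c ^ 2 := by
    linarith [hell.mul_sq_le_two_mul_gamma u (Or.inr hxy), hu x]
  exact abs_le_of_sq_le_sq (le_of_mul_le_mul_left hsq hα) hc

/-! ### The drift operator -/

/-- The operator `1 + τ (Δ + 2 Γ(u, ·))`, the linearisation of an Euler step of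
`∂ₜ u = Δ u + Γ u` around `u`. -/
noncomputable def driftStep (G : WeightedGraph V) (τ : ℝ) (u : V → ℝ) :
    (V → ℝ) →ₗ[ℝ] (V → ℝ) where
  toFun f := f + τ • (G.lap f + (2 : ℝ) • G.gammaBil u f)
  map_add' f g := by rw [lap_add, gammaBil_add_right]; module
  map_smul' c f := by rw [lap_smul, gammaBil_smul_right, RingHom.id_apply]; module

lemma driftStep_def (τ : ℝ) (u f : V → ℝ) :
    G.driftStep τ u f = f + τ • (G.lap f + (2 : ℝ) • G.gammaBil u f) :=
  rfl

lemma driftStep_apply (τ : ℝ) (u f : V → ℝ) (x : V) :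
    G.driftStep τ u f x
      = f x + τ * ∑ y ∈ G.neighborFinset x, G.p x y * ((1 + (u y - u x)) * (f y - f x)) := by
  have hsplit : G.lap f x + 2 * G.gammaBil u f x
      = ∑ y ∈ G.neighborFinset x, G.p x y * ((1 + (u y - u x)) * (f y - f x)) := by
    rw [lap_eq_sum, gammaBil_eq_sum, ← mul_assoc, mul_one_div_cancel two_ne_zero, one_mul,
      ← Finset.sum_add_distrib]
    exact Finset.sum_congr rfl fun y _ => by ring
  rw [← hsplit]
  rfl

lemma driftStep_const (τ : ℝ) (u : V → ℝ) (c : ℝ) :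
    G.driftStep τ u (Function.const V c) = Function.const V c := by
  ext x
  simp [driftStep_apply]

section DriftStep

variable {τ : ℝ} {u : V → ℝ}

lemma le_driftStep (hτ : 0 ≤ τ) (hu : G.EdgeLipschitz (1 / 2) u) {f : V → ℝ} (hf : 0 ≤ f)
    (x : V) : (1 - 3 / 2 * τ) * f x ≤ G.driftStep τ u f x := by
  have hsum : -(3 / 2) * f x
      ≤ ∑ y ∈ G.neighborFinset x, G.p x y * ((1 + (u y - u x)) * (f y - f x)) := by
    refine le_sum_p_mul fun y hy => ?_
    obtain ⟨hlo, hhi⟩ := abs_le.mp (hu x y hy)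
    have hy0 : 0 ≤ (1 + (u y - u x)) * f y := mul_nonneg (by linarith) (hf y)
    have hx0 : 0 ≤ (1 / 2 - (u y - u x)) * f x := mul_nonneg (by linarith) (hf x)
    linarith
  rw [driftStep_apply]
  linarith [mul_le_mul_of_nonneg_left hsum hτ]

lemma driftStep_le (hτ : 0 ≤ τ) (hu : G.EdgeLipschitz (1 / 2) u) {f : V → ℝ} {c : ℝ}
    (hf : 0 ≤ f) (hfc : ∀ y, f y ≤ c) (x : V) :
    G.driftStep τ u f x ≤ f x + 3 / 2 * c * τ := by
  have hsum : ∑ y ∈ G.neighborFinset x, G.p x y * ((1 + (u y - u x)) * (f y - f x))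
      ≤ 3 / 2 * c := by
    refine sum_p_mul_le fun y hy => ?_
    obtain ⟨hlo, hhi⟩ := abs_le.mp (hu x y hy)
    have hc : 0 ≤ c := (hf x).trans (hfc x)
    calc (1 + (u y - u x)) * (f y - f x) ≤ (1 + (u y - u x)) * c :=
          mul_le_mul_of_nonneg_left (by linarith [hf x, hfc y, Pi.zero_apply (M := fun _ => ℝ) x])
            (by linarith)
      _ ≤ 3 / 2 * c := mul_le_mul_of_nonneg_right (by linarith) hc
  rw [driftStep_apply]
  linarith [mul_le_mul_of_nonneg_left hsum hτ]

lemma driftStep_nonneg (hτ : 0 ≤ τ) (hτ' : τ ≤ 2 / 3) (hu : G.EdgeLipschitz (1 / 2) u)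
    {f : V → ℝ} (hf : 0 ≤ f) : 0 ≤ G.driftStep τ u f := fun x =>
  (mul_nonneg (by linarith) (hf x)).trans (le_driftStep hτ hu hf x)

lemma driftStep_mono (hτ : 0 ≤ τ) (hτ' : τ ≤ 2 / 3) (hu : G.EdgeLipschitz (1 / 2) u) :
    Monotone (G.driftStep τ u) := fun f g hfg => by
  rw [← sub_nonneg, ← map_sub]
  exact driftStep_nonneg hτ hτ' hu (sub_nonneg.mpr hfg)

/-- Jensen's inequality for the Markov operator `driftStep`. -/
lemma sq_driftStep_le (hτ : 0 ≤ τ) (hτ' : τ ≤ 2 / 3) (hu : G.EdgeLipschitz (1 / 2) u)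
    (f : V → ℝ) (x : V) : G.driftStep τ u f x ^ 2 ≤ G.driftStep τ u (f ^ 2) x := by
  set c := G.driftStep τ u f x
  have hvar : 0 ≤ G.driftStep τ u ((f - Function.const V c) ^ 2) x :=
    driftStep_nonneg hτ hτ' hu (fun y => sq_nonneg _) x
  have hexpand : (f - Function.const V c) ^ 2
      = f ^ 2 - (2 * c) • f + Function.const V (c ^ 2) := by
    ext y
    simp only [Pi.pow_apply, Pi.sub_apply, Pi.add_apply, Pi.smul_apply, smul_eq_mul,
      Function.const_apply]
    ring
  have hvalue : G.driftStep τ u ((f - Function.const V c) ^ 2) x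
      = G.driftStep τ u (f ^ 2) x - 2 * c * c + c ^ 2 := by
    rw [hexpand, map_add, map_sub, map_smul, driftStep_const]
    rfl
  linarith

end DriftStep

/-! ### One explicit Euler step -/

/-- One explicit Euler step of size `τ` for the flow `∂ₜ u = Δ u + Γ u`. -/
noncomputable def eulerStep (G : WeightedGraph V) (τ : ℝ) (u : V → ℝ) : V → ℝ :=
  u + τ • (G.lap u + G.gamma u)

lemma eulerStep_apply (τ : ℝ) (u : V → ℝ) (x : V) :
    G.eulerStep τ u x = u x + τ * (G.lap u x + G.gamma u x) :=
  rfl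

lemma gamma2_eq (u : V → ℝ) :
    G.gamma2 u = (1 / 2 : ℝ) • G.lap (G.gamma u) - G.gammaBil u (G.lap u) :=
  rfl

lemma lap_eulerStep (τ : ℝ) (u : V → ℝ) :
    G.lap (G.eulerStep τ u) = G.driftStep τ u (G.lap u) + (2 * τ) • G.gamma2 u := by
  rw [eulerStep, lap_add, lap_smul, lap_add, driftStep_def, gamma2_eq]
  module

lemma gamma_eulerStep (τ : ℝ) (u : V → ℝ) :
    G.gamma (G.eulerStep τ u)
      = G.driftStep τ u (G.gamma u) - (2 * τ) • G.gamma2 u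
        + τ ^ 2 • G.gamma (G.lap u + G.gamma u) := by
  rw [eulerStep, gamma_add_smul, gammaBil_add_right, driftStep_def, gamma2_eq]
  module

/-- The quantity `Γ u + (2 t / n) ((Δ u)⁻)²`, whose supremum is, up to discretisation errors,
nonincreasing along the flow when `t` is the time. -/
noncomputable def gradientFunctional (G : WeightedGraph V) (n : ℕ) (t : ℝ) (u : V → ℝ) : V → ℝ :=
  G.gamma u + (2 * t / n) • (G.lap u)⁻ ^ 2

lemma gradientFunctional_apply (n : ℕ) (t : ℝ) (u : V → ℝ) (x : V) :
    G.gradientFunctional n t u x = G.gamma u x + 2 * t / n * (G.lap u x)⁻ ^ 2 :=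
  rfl

lemma gamma_le_gradientFunctional (n : ℕ) {t : ℝ} (ht : 0 ≤ t) (u : V → ℝ) (x : V) :
    G.gamma u x ≤ G.gradientFunctional n t u x :=
  le_add_of_nonneg_right (mul_nonneg (by positivity) (sq_nonneg _))

section EulerStep

variable {n : ℕ} {τ : ℝ} {u : V → ℝ}

lemma eulerStep_nonneg (hτ : 0 ≤ τ) (hτ' : τ ≤ 1) (hu : 0 ≤ u) : 0 ≤ G.eulerStep τ u := by
  intro x
  have hlap : -u x ≤ G.lap u x := by
    rw [lap_eq_sum]
    exact le_sum_p_mul fun y _ => by linarith [hu y, Pi.zero_apply (M := fun _ => ℝ) y]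
  calc (0 : ℝ) ≤ (1 - τ) * u x := mul_nonneg (by linarith) (hu x)
    _ = u x + τ * (-u x + 0) := by ring
    _ ≤ u x + τ * (G.lap u x + G.gamma u x) := by gcongr; exact gamma_nonneg u x

lemma gamma_eulerStep_le (hu : G.EdgeLipschitz (1 / 2) u) (x : V) :
    G.gamma (G.eulerStep τ u) x
      ≤ G.driftStep τ u (G.gamma u) x - 2 * τ * G.gamma2 u x + 2 * τ ^ 2 := by
  have hbounds : ∀ y, -(1 / 2) ≤ (G.lap u + G.gamma u) y ∧ (G.lap u + G.gamma u) y ≤ 1 :=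
    fun y => by
      rw [Pi.add_apply]
      constructor <;> linarith [hu.lap_le y, hu.neg_le_lap y, gamma_nonneg (G := G) u y,
        hu.gamma_le y]
  have hincr : G.EdgeLipschitz 2 (G.lap u + G.gamma u) := fun y z _ =>
    abs_le.mpr (by constructor <;> linarith [hbounds y, hbounds z])
  have herr := mul_le_mul_of_nonneg_left (hincr.gamma_le x) (sq_nonneg τ)
  rw [gamma_eulerStep]
  simp only [Pi.add_apply, Pi.sub_apply, Pi.smul_apply, smul_eq_mul]
  linarith

lemma CD.lap_sq_le_gamma2 (hCD : G.CD 0 n) (hτ : 0 ≤ τ) (u : V → ℝ) (x : V) :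
    2 * τ / n * G.lap u x ^ 2 ≤ 2 * τ * G.gamma2 u x := by
  calc 2 * τ / n * G.lap u x ^ 2 = 2 * τ * (G.lap u x ^ 2 / n) := by ring
    _ ≤ 2 * τ * G.gamma2 u x :=
      mul_le_mul_of_nonneg_left (hCD.lap_sq_div_le_gamma2 u x) (by positivity)

lemma CD.le_lap_eulerStep (hCD : G.CD 0 n) (hn : 0 < n) (hτ : 0 ≤ τ) (hτ' : τ ≤ 1 / 4)
    (hu : G.EdgeLipschitz (1 / 2) u) {m : ℝ} (hm1 : m ≤ 1 / 2) (hm : ∀ y, -m ≤ G.lap u y)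
    (x : V) : -m + 2 * τ / n * m ^ 2 ≤ G.lap (G.eulerStep τ u) x := by
  set q := 2 * τ / (n : ℝ)
  set g := G.lap u x
  have hq : 0 ≤ q := by positivity
  have hqτ : q ≤ 2 * τ := div_le_self (by positivity) (by exact_mod_cast hn)
  have hg : 0 ≤ g + m := by linarith [hm x]
  have hdrift : (1 - 3 / 2 * τ) * (g + m) ≤ G.driftStep τ u (G.lap u) x + m := by
    have h := le_driftStep hτ hu (f := G.lap u + Function.const V m)
      (fun y => by simpa using neg_le_iff_add_nonneg.mp (hm y)) x
    rwa [map_add, driftStep_const] at h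
  have hcd : q * g ^ 2 ≤ 2 * τ * G.gamma2 u x := hCD.lap_sq_le_gamma2 hτ u x
  have hlinear : q * (2 * m) * (g + m) ≤ 2 * τ * (g + m) :=
    mul_le_mul_of_nonneg_right
      ((mul_le_of_le_one_right hq (by linarith)).trans hqτ) hg
  have hsmall : 0 ≤ (1 - 7 / 2 * τ) * (g + m) := mul_nonneg (by linarith) hg
  rw [lap_eulerStep, Pi.add_apply, Pi.smul_apply, smul_eq_mul]
  nlinarith [mul_nonneg hq (sq_nonneg (g + m))]

lemma CD.negPart_lap_eulerStep_sq_le (hCD : G.CD 0 n) (hτ : 0 ≤ τ) (hτ' : τ ≤ 2 / 3)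
    (hu : G.EdgeLipschitz (1 / 2) u) (x : V) :
    (G.lap (G.eulerStep τ u) x)⁻ ^ 2 ≤ G.driftStep τ u ((G.lap u)⁻ ^ 2) x := by
  have hle : (G.lap (G.eulerStep τ u) x)⁻ ≤ G.driftStep τ u (G.lap u)⁻ x := by
    refine sup_le ?_ (driftStep_nonneg hτ hτ' hu (negPart_nonneg _) x)
    have hmono := driftStep_mono hτ hτ' hu (neg_le_negPart (G.lap u)) x
    rw [map_neg, Pi.neg_apply] at hmono
    rw [lap_eulerStep, Pi.add_apply, Pi.smul_apply, smul_eq_mul]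
    linarith [mul_nonneg hτ (hCD.gamma2_nonneg u x)]
  exact (pow_le_pow_left₀ (negPart_nonneg _) hle 2).trans (sq_driftStep_le hτ hτ' hu _ x)

lemma EdgeLipschitz.driftStep_negPart_lap_sq_le (hu : G.EdgeLipschitz (1 / 2) u) (hτ : 0 ≤ τ)
    (x : V) : G.driftStep τ u ((G.lap u)⁻ ^ 2) x ≤ G.lap u x ^ 2 + τ := by
  have hle : ∀ y, ((G.lap u)⁻ ^ 2) y ≤ 1 / 4 := fun y => by
    have hhalf : (G.lap u y)⁻ ≤ 1 / 2 := sup_le (by linarith [hu.neg_le_lap y]) (by norm_num)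
    calc (G.lap u y)⁻ ^ 2 ≤ (1 / 2) ^ 2 := pow_le_pow_left₀ (negPart_nonneg _) hhalf 2
      _ = 1 / 4 := by norm_num
  have habs : (G.lap u x)⁻ ^ 2 ≤ G.lap u x ^ 2 :=
    sq_le_sq.mpr ((abs_of_nonneg (negPart_nonneg _)).trans_le
      (sup_le (neg_le_abs _) (abs_nonneg _)))
  calc G.driftStep τ u ((G.lap u)⁻ ^ 2) x ≤ (G.lap u x)⁻ ^ 2 + 3 / 2 * (1 / 4) * τ :=
        driftStep_le hτ hu (fun y => sq_nonneg _) hle x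
    _ ≤ G.lap u x ^ 2 + τ := by linarith

lemma CD.gradientFunctional_eulerStep_le (hCD : G.CD 0 n) (hn : 0 < n) (hτ : 0 ≤ τ)
    (hτ' : τ ≤ 2 / 3) (hu : G.EdgeLipschitz (1 / 2) u) {t c : ℝ} (ht : 0 ≤ t)
    (hc : ∀ y, G.gradientFunctional n t u y ≤ c) (x : V) :
    G.gradientFunctional n (t + τ) (G.eulerStep τ u) x ≤ c + 4 * τ ^ 2 := by
  set h : V → ℝ := (G.lap u)⁻ ^ 2
  have hold : G.driftStep τ u (G.gamma u) x + 2 * t / n * G.driftStep τ u h x ≤ c := by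
    have hle := driftStep_mono hτ hτ' hu (show _ ≤ Function.const V c from hc) x
    rwa [driftStep_const, gradientFunctional, map_add, map_smul] at hle
  have hnew : 2 * τ / n * G.driftStep τ u h x ≤ 2 * τ * G.gamma2 u x + 2 * τ ^ 2 :=
    calc 2 * τ / n * G.driftStep τ u h x ≤ 2 * τ / n * (G.lap u x ^ 2 + τ) :=
          mul_le_mul_of_nonneg_left (hu.driftStep_negPart_lap_sq_le hτ x) (by positivity)
      _ = 2 * τ / n * G.lap u x ^ 2 + 2 * τ ^ 2 / n := by ring
      _ ≤ 2 * τ * G.gamma2 u x + 2 * τ ^ 2 :=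
          add_le_add (hCD.lap_sq_le_gamma2 hτ u x)
            (div_le_self (by positivity) (by exact_mod_cast hn))
  calc G.gradientFunctional n (t + τ) (G.eulerStep τ u) x
      ≤ (G.driftStep τ u (G.gamma u) x - 2 * τ * G.gamma2 u x + 2 * τ ^ 2)
        + 2 * (t + τ) / n * G.driftStep τ u h x :=
        add_le_add (gamma_eulerStep_le hu x) (mul_le_mul_of_nonneg_left
          (hCD.negPart_lap_eulerStep_sq_le hτ hτ' hu x) (by positivity))
    _ = (G.driftStep τ u (G.gamma u) x + 2 * t / n * G.driftStep τ u h x)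
        + 2 * τ / n * G.driftStep τ u h x - 2 * τ * G.gamma2 u x + 2 * τ ^ 2 := by ring
    _ ≤ c + 4 * τ ^ 2 := by linarith

end EulerStep

/-! ### The exponential mass -/

lemma one_add_three_mul_add_sq_le_exp {s : ℝ} (hs : -(1 / 2) ≤ s) :
    1 + 3 * s + 5 / 2 * s ^ 2 ≤ Real.exp (3 * s) :=
  calc 1 + 3 * s + 5 / 2 * s ^ 2
      = (s + 1) ^ 3 - s ^ 2 * (s + 1 / 2) := by ring
    _ ≤ (s + 1) ^ 3 := sub_le_self _ (mul_nonneg (sq_nonneg s) (by linarith))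
    _ ≤ Real.exp s ^ 3 := pow_le_pow_left₀ (by linarith) (Real.add_one_le_exp s) 3
    _ = Real.exp (3 * s) := by rw [← Real.exp_nat_mul, Nat.cast_ofNat]

/-- The density `exp (3 u) - 1`. For the continuous flow `exp u` solves the heat equation, so
`∫ (exp u - 1) dμ` is conserved; the larger exponent leaves a multiple of `Γ u` to absorb the
discretisation error. -/
noncomputable def expDensity (u : V → ℝ) : V → ℝ :=
  (fun s => Real.exp (3 * s) - 1) ∘ u

lemma expDensity_apply (u : V → ℝ) (x : V) : expDensity u x = Real.exp (3 * u x) - 1 :=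
  rfl

lemma three_mul_le_expDensity (u : V → ℝ) (x : V) : 3 * u x ≤ expDensity u x := by
  linarith [Real.add_one_le_exp (3 * u x), expDensity_apply u x]

lemma hasFiniteSupport_expDensity {u : V → ℝ} (hu : u.HasFiniteSupport) :
    (expDensity u).HasFiniteSupport :=
  hu.comp (by rw [mul_zero, Real.exp_zero, sub_self])

lemma exp_mul_le_lap_expDensity {u : V → ℝ} (hu : G.EdgeLipschitz (1 / 2) u) (x : V) :
    Real.exp (3 * u x) * (3 * G.lap u x + 5 * G.gamma u x) ≤ G.lap (expDensity u) x := by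
  have hsum : 3 * G.lap u x + 5 * G.gamma u x
      = ∑ y ∈ G.neighborFinset x,
          G.p x y * (3 * (u y - u x) + 5 / 2 * (u y - u x) ^ 2) := by
    rw [lap_eq_sum, gamma_eq_sum, Finset.mul_sum, Finset.mul_sum, Finset.mul_sum,
      ← Finset.sum_add_distrib]
    exact Finset.sum_congr rfl fun y _ => by ring
  rw [hsum, lap_eq_sum, Finset.mul_sum]
  refine Finset.sum_le_sum fun y hy => ?_
  have hstep := one_add_three_mul_add_sq_le_exp (abs_le.mp (hu x y (mem_neighborFinset.mp hy))).1
  calc Real.exp (3 * u x) * (G.p x y * (3 * (u y - u x) + 5 / 2 * (u y - u x) ^ 2))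
      = G.p x y * (Real.exp (3 * u x) * (3 * (u y - u x) + 5 / 2 * (u y - u x) ^ 2)) := by ring
    _ ≤ G.p x y * (Real.exp (3 * u x) * (Real.exp (3 * (u y - u x)) - 1)) :=
        mul_le_mul_of_nonneg_left
          (mul_le_mul_of_nonneg_left (by linarith) (Real.exp_pos _).le) (G.p_nonneg x y)
    _ = G.p x y * (expDensity u y - expDensity u x) := by
        rw [mul_sub, ← Real.exp_add, expDensity_apply, expDensity_apply]
        ring_nf

lemma exp_three_mul_lap_add_gamma_le {τ : ℝ} (hτ : 0 ≤ τ) (hτ' : τ ≤ 1 / 25) {u : V → ℝ}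
    (hu : G.EdgeLipschitz (1 / 2) u) (x : V) :
    Real.exp (3 * (τ * (G.lap u x + G.gamma u x)))
      ≤ 1 + τ * (3 * G.lap u x + 5 * G.gamma u x) := by
  set w := G.lap u x + G.gamma u x
  have hγ : 0 ≤ G.gamma u x := gamma_nonneg u x
  have hγ' : G.gamma u x ≤ 1 / 8 := (hu.gamma_le x).trans (by norm_num)
  have hw1 : |w| ≤ 1 :=
    abs_le.mpr (by constructor <;> linarith [hu.lap_le x, hu.neg_le_lap x])
  have hw2 : w ^ 2 ≤ 5 * G.gamma u x := by
    linarith [add_sq_le (a := G.lap u x) (b := G.gamma u x), lap_sq_le_two_mul_gamma (G := G) u x,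
      mul_le_mul_of_nonneg_right hγ' hγ]
  have hsmall : |3 * (τ * w)| ≤ 1 := by
    rw [abs_mul, abs_mul, abs_of_nonneg hτ, abs_of_nonneg zero_le_three]
    linarith [mul_le_mul hτ' hw1 (abs_nonneg w) (by norm_num)]
  have herr : (3 * (τ * w)) ^ 2 ≤ 2 * (τ * G.gamma u x) :=
    calc (3 * (τ * w)) ^ 2 = 9 * τ * (τ * w ^ 2) := by ring
      _ ≤ 9 * (1 / 25) * (τ * (5 * G.gamma u x)) := by gcongr
      _ ≤ 2 * (τ * G.gamma u x) := by linarith [mul_nonneg hτ hγ]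
  linarith [(abs_le.mp (Real.abs_exp_sub_one_sub_id_le hsmall)).2]

lemma expDensity_eulerStep_le {τ : ℝ} (hτ : 0 ≤ τ) (hτ' : τ ≤ 1 / 25) {u : V → ℝ}
    (hu : G.EdgeLipschitz (1 / 2) u) (x : V) :
    expDensity (G.eulerStep τ u) x ≤ expDensity u x + τ * G.lap (expDensity u) x :=
  calc expDensity (G.eulerStep τ u) x
      = Real.exp (3 * u x) * Real.exp (3 * (τ * (G.lap u x + G.gamma u x))) - 1 := by
        rw [expDensity_apply, eulerStep_apply, mul_add, Real.exp_add]
    _ ≤ Real.exp (3 * u x) * (1 + τ * (3 * G.lap u x + 5 * G.gamma u x)) - 1 := by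
        gcongr
        exact exp_three_mul_lap_add_gamma_le hτ hτ' hu x
    _ = expDensity u x + τ * (Real.exp (3 * u x) * (3 * G.lap u x + 5 * G.gamma u x)) := by
        rw [expDensity_apply]
        ring
    _ ≤ expDensity u x + τ * G.lap (expDensity u) x := by
        gcongr
        exact exp_mul_le_lap_expDensity hu x

lemma lap_eq_sum_sub {f : V → ℝ} {s : Finset V} (hf : ∀ y, y ∉ s → f y = 0) (x : V) :
    G.lap f x = ∑ y ∈ s, G.p x y * f y - f x := by
  have hsum : ∑ y ∈ G.neighborFinset x, G.p x y * f y = ∑ y ∈ s, G.p x y * f y :=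
    calc ∑ y ∈ G.neighborFinset x, G.p x y * f y = ∑' y, G.p x y * f y :=
          (tsum_eq_sum fun y hy => by rw [p_eq_zero_of_notMem hy, zero_mul]).symm
      _ = ∑ y ∈ s, G.p x y * f y := tsum_eq_sum fun y hy => by rw [hf y hy, mul_zero]
  rw [lap_eq_sum, ← hsum]
  simp only [mul_sub, Finset.sum_sub_distrib]
  rw [← Finset.sum_mul, sum_p_neighborFinset, one_mul]

namespace IsReversible

lemma hasSum_mul_lap (hrev : G.IsReversible) {f : V → ℝ} (hf : f.HasFiniteSupport) :
    HasSum (fun x => G.μ x * G.lap f x) 0 := by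
  set s := Set.Finite.toFinset hf
  have hs : ∀ y, y ∉ s → f y = 0 := fun y hy =>
    Function.notMem_support.mp fun hy' => hy ((Set.Finite.mem_toFinset hf).mpr hy')
  have hmarkov : ∀ y ∈ s, HasSum (fun x => G.μ x * (G.p x y * f y)) (G.μ y * f y) := by
    intro y _
    have hterm : (fun x => G.μ x * (G.p x y * f y)) = fun x => G.p y x * (G.μ y * f y) :=
      funext fun x => by rw [← mul_assoc, mul_comm (G.μ x), hrev x y, mul_assoc]
    simpa only [hterm, one_mul] using (G.markov y).mul_right (G.μ y * f y)
  have hf_sum : HasSum (fun x => G.μ x * f x) (∑ y ∈ s, G.μ y * f y) :=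
    hasSum_sum_of_ne_finset_zero fun y hy => by rw [hs y hy, mul_zero]
  simpa only [lap_eq_sum_sub hs, mul_sub, Finset.mul_sum, sub_self] using
    (hasSum_sum hmarkov).sub hf_sum

lemma hasFiniteSupport_eulerStep (hrev : G.IsReversible) (τ : ℝ) {u : V → ℝ}
    (hu : u.HasFiniteSupport) : (G.eulerStep τ u).HasFiniteSupport := by
  refine (Set.Finite.union hu (Set.Finite.biUnion hu fun y _ => G.locallyFinite y)).subset ?_
  intro x hx
  by_contra hfar
  simp only [Set.mem_union, Set.mem_iUnion, not_or, not_exists, Function.notMem_support] at hfar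
  obtain ⟨hux, hfar⟩ := hfar
  have hnbr : ∀ y ∈ G.neighborFinset x, u y = 0 := fun y hy => by
    by_contra hy0
    exact hfar y hy0 (hrev.p_pos_symm (mem_neighborFinset.mp hy))
  refine hx ?_
  rw [eulerStep_apply, lap_eq_sum, gamma_eq_sum, hux,
    Finset.sum_eq_zero fun y hy => by rw [hnbr y hy, sub_self, mul_zero],
    Finset.sum_eq_zero fun y hy => by rw [hnbr y hy, sub_self, zero_pow two_ne_zero, mul_zero],
    mul_zero, add_zero, mul_zero, add_zero]

end IsReversible

/-- The exponential mass `∫ (exp (3 u) - 1) dμ`, meant for finitely supported `u`. -/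
noncomputable def expMass (G : WeightedGraph V) (u : V → ℝ) : ℝ :=
  ∑' x, G.μ x * expDensity u x

lemma hasSum_expMass {u : V → ℝ} (hu : u.HasFiniteSupport) :
    HasSum (fun x => G.μ x * expDensity u x) (G.expMass u) :=
  (summable_of_hasFiniteSupport ((hasFiniteSupport_expDensity hu).fun_mul_right G.μ)).hasSum

lemma IsReversible.expMass_eulerStep_le (hrev : G.IsReversible) {τ : ℝ} (hτ : 0 ≤ τ)
    (hτ' : τ ≤ 1 / 25) {u : V → ℝ} (hu : G.EdgeLipschitz (1 / 2) u) (hfin : u.HasFiniteSupport) :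
    G.expMass (G.eulerStep τ u) ≤ G.expMass u := by
  have hflow := (hasSum_expMass (G := G) hfin).add
    ((hrev.hasSum_mul_lap (hasFiniteSupport_expDensity hfin)).mul_left τ)
  rw [mul_zero, add_zero] at hflow
  refine hasSum_le (fun x => ?_) (hasSum_expMass (hrev.hasFiniteSupport_eulerStep τ hfin)) hflow
  calc G.μ x * expDensity (G.eulerStep τ u) x
      ≤ G.μ x * (expDensity u x + τ * G.lap (expDensity u) x) :=
        mul_le_mul_of_nonneg_left (expDensity_eulerStep_le hτ hτ' hu x) (G.μ_pos x).le
    _ = G.μ x * expDensity u x + τ * (G.μ x * G.lap (expDensity u) x) := by ring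

lemma sum_le_expMass {u : V → ℝ} (hfin : u.HasFiniteSupport) (hu : 0 ≤ u) {s : Finset V}
    (hs : ∀ x ∈ s, 1 / 2 ≤ u x) : ∑ x ∈ s, G.μ x ≤ G.expMass u :=
  calc ∑ x ∈ s, G.μ x ≤ ∑ x ∈ s, G.μ x * expDensity u x :=
        Finset.sum_le_sum fun x hx => le_mul_of_one_le_right (G.μ_pos x).le
          (by linarith [hs x hx, three_mul_le_expDensity u x])
    _ ≤ G.expMass u := sum_le_hasSum s (fun x _ => mul_nonneg (G.μ_pos x).le
        ((mul_nonneg zero_le_three (hu x)).trans (three_mul_le_expDensity u x)))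
        (hasSum_expMass hfin)

lemma expMass_le {u : V → ℝ} {M : ℝ} (huM : ∀ x, u x ≤ M) {s : Finset V}
    (hs : ∀ x, x ∉ s → u x = 0) : G.expMass u ≤ Real.exp (3 * M) * ∑ x ∈ s, G.μ x := by
  have hzero : ∀ x, x ∉ s → G.μ x * expDensity u x = 0 := fun x hx => by
    rw [expDensity_apply, hs x hx, mul_zero, Real.exp_zero, sub_self, mul_zero]
  rw [expMass, tsum_eq_sum hzero, Finset.mul_sum]
  refine Finset.sum_le_sum fun x _ => ?_
  rw [mul_comm]
  refine mul_le_mul_of_nonneg_right ?_ (G.μ_pos x).le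
  exact (sub_le_self _ zero_le_one).trans
    (Real.exp_le_exp.mpr (mul_le_mul_of_nonneg_left (huM x) zero_le_three))

/-! ### The discrete flow -/

/-- The explicit Euler scheme for `∂ₜ u = Δ u + Γ u` with initial datum `u`, after `k` steps of
size `τ`. -/
noncomputable def flow (G : WeightedGraph V) (τ : ℝ) (u : V → ℝ) (k : ℕ) : V → ℝ :=
  (G.eulerStep τ)^[k] u

section Flow

variable {n : ℕ} {α τ c ε : ℝ} {u : V → ℝ} {k : ℕ}

lemma flow_zero : G.flow τ u 0 = u :=
  rfl

lemma flow_succ : G.flow τ u (k + 1) = G.eulerStep τ (G.flow τ u k) :=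
  Function.iterate_succ_apply' _ _ _

lemma flow_flow (j : ℕ) : G.flow τ (G.flow τ u k) j = G.flow τ u (j + k) :=
  (Function.iterate_add_apply _ j k u).symm

lemma flow_nonneg (hτ : 0 ≤ τ) (hτ' : τ ≤ 1) (hu : 0 ≤ u) (k : ℕ) : 0 ≤ G.flow τ u k := by
  induction k with
  | zero => exact hu
  | succ k ih => rw [flow_succ]; exact eulerStep_nonneg hτ hτ' ih

lemma IsReversible.hasFiniteSupport_flow (hrev : G.IsReversible) (τ : ℝ)
    (hu : u.HasFiniteSupport) (k : ℕ) : (G.flow τ u k).HasFiniteSupport := by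
  induction k with
  | zero => exact hu
  | succ k ih => rw [flow_succ]; exact hrev.hasFiniteSupport_eulerStep τ ih

lemma IsReversible.expMass_flow_le (hrev : G.IsReversible) (hτ : 0 ≤ τ) (hτ' : τ ≤ 1 / 25)
    (hfin : u.HasFiniteSupport) (hu : ∀ j < k, G.EdgeLipschitz (1 / 2) (G.flow τ u j)) :
    G.expMass (G.flow τ u k) ≤ G.expMass u := by
  induction k with
  | zero => rfl
  | succ k ih =>
    rw [flow_succ]
    exact (hrev.expMass_eulerStep_le hτ hτ' (hu k k.lt_succ_self)
      (hrev.hasFiniteSupport_flow τ hfin k)).trans (ih fun j hj => hu j (hj.trans k.lt_succ_self))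

lemma IsElliptic.edgeLipschitz_of_gradientFunctional_le (hell : G.IsElliptic α) (hα : 0 < α)
    {t : ℝ} (ht : 0 ≤ t) (hu : ∀ x, G.gradientFunctional n t u x ≤ α / 8) :
    G.EdgeLipschitz (1 / 2) u :=
  hell.edgeLipschitz_of_gamma_le hα one_half_pos.le fun x =>
    ((gamma_le_gradientFunctional n ht u x).trans (hu x)).trans_eq (by ring)

lemma CD.gradientFunctional_flow_le (hCD : G.CD 0 n) (hn : 0 < n) (hell : G.IsElliptic α)
    (hα : 0 < α) (hτ : 0 ≤ τ) (hτ' : τ ≤ 2 / 3) (hu : ∀ x, G.gamma u x ≤ c)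
    (hc : c + 4 * τ ^ 2 * k ≤ α / 8) (x : V) :
    G.gradientFunctional n (τ * k) (G.flow τ u k) x ≤ c + 4 * τ ^ 2 * k := by
  induction k generalizing x with
  | zero => simpa [gradientFunctional_apply, flow_zero] using hu x
  | succ k ih =>
    push_cast at hc ⊢
    have hck : c + 4 * τ ^ 2 * k ≤ α / 8 := by linarith [sq_nonneg τ]
    have hlip : G.EdgeLipschitz (1 / 2) (G.flow τ u k) :=
      hell.edgeLipschitz_of_gradientFunctional_le hα (mul_nonneg hτ k.cast_nonneg)
        fun y => (ih hck y).trans hck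
    rw [flow_succ, mul_add_one, mul_add_one, ← add_assoc]
    exact hCD.gradientFunctional_eulerStep_le hn hτ hτ' hlip (mul_nonneg hτ k.cast_nonneg)
      (ih hck) x

lemma CD.edgeLipschitz_flow (hCD : G.CD 0 n) (hn : 0 < n) (hell : G.IsElliptic α) (hα : 0 < α)
    (hτ : 0 ≤ τ) (hτ' : τ ≤ 2 / 3) (hu : ∀ x, G.gamma u x ≤ c)
    (hc : c + 4 * τ ^ 2 * k ≤ α / 8) : G.EdgeLipschitz (1 / 2) (G.flow τ u k) :=
  hell.edgeLipschitz_of_gradientFunctional_le hα (mul_nonneg hτ k.cast_nonneg) fun x =>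
    (hCD.gradientFunctional_flow_le hn hell hα hτ hτ' hu hc x).trans hc

lemma neg_one_div_add_le {a q : ℝ} (ha : 0 < a) (hq : 0 ≤ q) :
    -(1 / (a + q)) ≤ -(1 / a) + q * (1 / a) ^ 2 := by
  have hgap : -(1 / a) + q * (1 / a) ^ 2 - -(1 / (a + q)) = q ^ 2 / (a ^ 2 * (a + q)) := by
    field_simp
    ring
  linarith [show 0 ≤ q ^ 2 / (a ^ 2 * (a + q)) by positivity]

/-- `1 / (2 + 2 t / n)` solves `m' = -(2 / n) m²` with `m 0 = 1 / 2`, the equation satisfied by the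
lower bound for `Δ u` in `CD.le_lap_eulerStep`. -/
lemma CD.le_lap_flow (hCD : G.CD 0 n) (hn : 0 < n) (hτ : 0 ≤ τ) (hτ' : τ ≤ 1 / 4)
    (hu : ∀ j ≤ k, G.EdgeLipschitz (1 / 2) (G.flow τ u j)) (x : V) :
    -(1 / (2 + 2 * τ / n * k)) ≤ G.lap (G.flow τ u k) x := by
  induction k generalizing x with
  | zero => simpa using (hu 0 le_rfl).neg_le_lap x
  | succ k ih =>
    have htime : (2 : ℝ) ≤ 2 + 2 * τ / n * k := le_add_of_nonneg_right (by positivity)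
    rw [flow_succ, Nat.cast_add_one, mul_add_one, ← add_assoc]
    exact (neg_one_div_add_le (by positivity) (by positivity)).trans
      (hCD.le_lap_eulerStep hn hτ hτ' (hu k k.le_succ)
        (one_div_le_one_div_of_le zero_lt_two htime) (ih fun j hj => hu j (hj.trans k.le_succ)) x)

lemma CD.li_yau_flow (hCD : G.CD 0 n) (hn : 0 < n) (hτ : 0 < τ) (hτ' : τ ≤ 1 / 4) (hk : 0 < k)
    (hu : ∀ j ≤ k, G.EdgeLipschitz (1 / 2) (G.flow τ u j)) (x : V) :
    -(n / (2 * (τ * k))) ≤ G.lap (G.flow τ u k) x := by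
  refine le_trans (neg_le_neg ?_) (hCD.le_lap_flow hn hτ.le hτ' hu x)
  calc 1 / (2 + 2 * τ / n * k) ≤ 1 / (2 * τ / n * k) :=
        one_div_le_one_div_of_le (by positivity) (le_add_of_nonneg_left zero_le_two)
    _ = n / (2 * (τ * k)) := by field_simp

lemma mul_le_mul_sqrt_sub_sqrt {ν t m : ℝ} (hν : 0 < ν) (ht : 0 ≤ t) (hτ : 0 < τ) (hε : 0 ≤ ε)
    (hm : 2 * (t + τ) / ν * m ^ 2 ≤ ε ^ 2) :
    τ * m ≤ ε * (√(2 * ν * (t + τ)) - √(2 * ν * t)) := by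
  set a := √(2 * ν * (t + τ))
  set b := √(2 * ν * t)
  have ha : 0 < a := by positivity
  have ha2 : a ^ 2 = 2 * ν * (t + τ) := Real.sq_sqrt (by positivity)
  have hb2 : b ^ 2 = 2 * ν * t := Real.sq_sqrt (by positivity)
  have hgap : ν * τ ≤ a * (a - b) := by linarith [two_mul_le_add_sq a b]
  have ham : a * m ≤ ν * ε := by
    refine le_of_sq_le_sq ?_ (by positivity)
    calc (a * m) ^ 2 = ν ^ 2 * (2 * (t + τ) / ν * m ^ 2) := by
          rw [mul_pow, ha2]
          field_simp
      _ ≤ ν ^ 2 * ε ^ 2 := mul_le_mul_of_nonneg_left hm (sq_nonneg ν)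
      _ = (ν * ε) ^ 2 := (mul_pow ν ε 2).symm
  refine le_of_mul_le_mul_left ?_ ha
  calc a * (τ * m) = τ * (a * m) := by ring
    _ ≤ τ * (ν * ε) := mul_le_mul_of_nonneg_left ham hτ.le
    _ = ε * (ν * τ) := by ring
    _ ≤ ε * (a * (a - b)) := mul_le_mul_of_nonneg_left hgap hε
    _ = a * (ε * (a - b)) := by ring

/-- The bound on `(Δ u)⁻` contained in `gradientFunctional` is `O(ε / √t)`, hence integrable in
time down to `t = 0`. -/
lemma sub_sqrt_le_flow (hn : 0 < n) (hτ : 0 < τ) (hε : 0 ≤ ε) (hu : G.EdgeLipschitz ε u) {x : V}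
    (hF : ∀ j ≤ k, G.gradientFunctional n (τ * j) (G.flow τ u j) x ≤ ε ^ 2) :
    u x - τ * ε - ε * √(2 * n * (τ * k)) ≤ G.flow τ u (k + 1) x := by
  induction k with
  | zero =>
    have hlap := mul_le_mul_of_nonneg_left (hu.neg_le_lap x) hτ.le
    have hgamma := mul_nonneg hτ.le (gamma_nonneg (G := G) u x)
    rw [flow_succ, flow_zero, eulerStep_apply, Nat.cast_zero, mul_zero, mul_zero, Real.sqrt_zero]
    linarith
  | succ k ih =>
    set w := G.flow τ u (k + 1)
    have hgamma : 0 ≤ G.gamma w x := gamma_nonneg w x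
    have hF' : 2 * (τ * k + τ) / n * (G.lap w x)⁻ ^ 2 ≤ ε ^ 2 := by
      have h := hF (k + 1) le_rfl
      rw [gradientFunctional_apply, Nat.cast_add_one, mul_add_one] at h
      linarith
    have hdrop : τ * (G.lap w x)⁻ ≤ ε * (√(2 * n * (τ * k + τ)) - √(2 * n * (τ * k))) :=
      mul_le_mul_sqrt_sub_sqrt (by exact_mod_cast hn) (by positivity) hτ hε hF'
    have hlap : -(τ * (G.lap w x)⁻) ≤ τ * (G.lap w x + G.gamma w x) := by
      rw [← mul_neg]
      gcongr
      linarith [neg_le_negPart (G.lap w x)]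
    rw [flow_succ, eulerStep_apply, Nat.cast_add_one, mul_add_one]
    linarith [ih fun j hj => hF j (hj.trans k.le_succ)]

end Flow

/-! ### Graph distance and balls -/

/-- `x` and `y` are joined by a path of `k` consecutive edges. -/
def HasPath (G : WeightedGraph V) (k : ℕ) (x y : V) : Prop :=
  ∃ c : Fin (k + 1) → V, c 0 = x ∧ c (Fin.last k) = y ∧
    ∀ i : Fin k, 0 < G.p (c i.castSucc) (c i.succ)

lemma hasPath_zero {x y : V} : G.HasPath 0 x y ↔ x = y := by
  constructor
  · rintro ⟨c, hx, hy, -⟩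
    exact hx.symm.trans hy
  · rintro rfl
    exact ⟨fun _ => x, rfl, rfl, fun i => i.elim0⟩

lemma hasPath_succ {k : ℕ} {x z : V} :
    G.HasPath (k + 1) x z ↔ ∃ y, G.HasPath k x y ∧ 0 < G.p y z := by
  constructor
  · rintro ⟨c, hx, hz, hedge⟩
    exact ⟨c (Fin.last k).castSucc, ⟨Fin.init c, hx, rfl, fun i => hedge i.castSucc⟩,
      hz ▸ hedge (Fin.last k)⟩
  · rintro ⟨y, ⟨c, hx, hy, hedge⟩, hyz⟩
    refine ⟨Fin.snoc c z, ?_, Fin.snoc_last (α := fun _ => V) z c, fun i => ?_⟩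
    · rw [← hx]
      exact Fin.snoc_castSucc (α := fun _ => V) z c 0
    · cases i using Fin.lastCases with
      | last => rwa [Fin.succ_last, Fin.snoc_last, Fin.snoc_castSucc, hy]
      | cast j => rw [Fin.succ_castSucc, Fin.snoc_castSucc, Fin.snoc_castSucc]; exact hedge j

lemma dist_le_of_hasPath {k : ℕ} {x y : V} (h : G.HasPath k x y) : G.dist x y ≤ k :=
  Nat.sInf_le h

lemma hasPath_dist (x y : V) : G.HasPath (G.dist x y) x y :=
  Nat.sInf_mem (G.connected x y)

lemma dist_self_eq_zero (x : V) : G.dist x x = 0 :=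
  Nat.le_zero.mp (dist_le_of_hasPath (hasPath_zero.mpr rfl))

lemma eq_of_dist_le_zero {x y : V} (h : G.dist x y ≤ 0) : x = y :=
  hasPath_zero.mp (Nat.le_zero.mp h ▸ hasPath_dist x y)

lemma dist_le_dist_add_one (x : V) {y z : V} (h : 0 < G.p y z) : G.dist x z ≤ G.dist x y + 1 :=
  dist_le_of_hasPath (hasPath_succ.mpr ⟨y, hasPath_dist x y, h⟩)

lemma exists_dist_le_of_dist_le_succ {k : ℕ} {x z : V} (h : G.dist x z ≤ k + 1) :
    ∃ y, G.dist x y ≤ k ∧ (y = z ∨ 0 < G.p y z) := by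
  rcases h.eq_or_lt with heq | hlt
  · obtain ⟨y, hxy, hyz⟩ := hasPath_succ.mp (heq ▸ hasPath_dist x z)
    exact ⟨y, dist_le_of_hasPath hxy, Or.inr hyz⟩
  · exact ⟨z, Nat.le_of_lt_succ hlt, Or.inl rfl⟩

lemma finite_setOf_dist_le (x : V) (k : ℕ) : {y | G.dist x y ≤ k}.Finite := by
  induction k with
  | zero => exact (Set.finite_singleton x).subset fun y hy => (eq_of_dist_le_zero hy).symm
  | succ k ih =>
    refine (ih.union (ih.biUnion fun y _ => G.locallyFinite y)).subset fun z hz => ?_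
    obtain ⟨y, hy, rfl | hyz⟩ := exists_dist_le_of_dist_le_succ hz
    · exact Or.inl hy
    · exact Or.inr (Set.mem_biUnion hy hyz)

lemma finite_setOf_cast_dist_le (x : V) (r : ℝ) : {y | (G.dist x y : ℝ) ≤ r}.Finite :=
  (finite_setOf_dist_le x ⌊r⌋₊).subset fun _ hy => Nat.le_floor hy

/-- The closed ball `B(x, r)` as a finset. -/
noncomputable def closedBall (G : WeightedGraph V) (x : V) (r : ℝ) : Finset V :=
  (finite_setOf_cast_dist_le (G := G) x r).toFinset

lemma mem_closedBall {x y : V} {r : ℝ} : y ∈ G.closedBall x r ↔ (G.dist x y : ℝ) ≤ r := by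
  simp [closedBall]

lemma ballMeasure_eq_sum (x : V) (r : ℝ) : G.ballMeasure x r = ∑ y ∈ G.closedBall x r, G.μ y := by
  rw [← Finset.tsum_subtype (G.closedBall x r) G.μ]
  exact ((Equiv.subtypeEquivRight fun _ => mem_closedBall).tsum_eq
    fun y : {y // (G.dist x y : ℝ) ≤ r} => G.μ y).symm

lemma ballMeasure_nonneg (x : V) (r : ℝ) : 0 ≤ G.ballMeasure x r :=
  tsum_nonneg fun y => (G.μ_pos y).le

lemma ballMeasure_mono (x : V) : Monotone (G.ballMeasure x) := fun r s hrs => by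
  rw [ballMeasure_eq_sum, ballMeasure_eq_sum]
  exact Finset.sum_le_sum_of_subset_of_nonneg
    (fun y hy => mem_closedBall.mpr ((mem_closedBall.mp hy).trans hrs))
    fun y _ _ => (G.μ_pos y).le

lemma exists_mem_closedBall_p_pos {x z : V} {r : ℝ} (hr : 0 ≤ r)
    (hz : z ∈ G.closedBall x (r + 1)) (hz' : z ∉ G.closedBall x r) :
    ∃ y ∈ G.closedBall x r, 0 < G.p y z := by
  have hfloor : G.dist x z ≤ ⌊r⌋₊ + 1 := by
    rw [← Nat.floor_add_one hr]
    exact Nat.le_floor (mem_closedBall.mp hz)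
  obtain ⟨y, hy, hyz⟩ := exists_dist_le_of_dist_le_succ hfloor
  have hmem : y ∈ G.closedBall x r :=
    mem_closedBall.mpr ((Nat.cast_le.mpr hy).trans (Nat.floor_le hr))
  exact ⟨y, hmem, hyz.resolve_left fun h => hz' (h ▸ hmem)⟩

section BoundedGeometry

variable {α : ℝ}

/-- In a shell of width one around a ball, ellipticity and reversibility bound the mass of `z` by
`1 / α` times the mass flowing to `z` from the ball in one step. -/
lemma ballMeasure_add_one_le (hα : 0 < α) (hell : G.IsElliptic α) (hrev : G.IsReversible) (x : V)
    {r : ℝ} (hr : 0 ≤ r) : G.ballMeasure x (r + 1) ≤ (1 + 1 / α) * G.ballMeasure x r := by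
  classical
  have hsub : G.closedBall x r ⊆ G.closedBall x (r + 1) := fun y hy =>
    mem_closedBall.mpr ((mem_closedBall.mp hy).trans (le_add_of_nonneg_right zero_le_one))
  set s := G.closedBall x r
  set shell := G.closedBall x (r + 1) \ s
  have hshell : ∀ z ∈ shell, α * G.μ z ≤ ∑ y ∈ s, G.p y z * G.μ y := by
    intro z hz
    obtain ⟨hz, hzs⟩ := Finset.mem_sdiff.mp hz
    obtain ⟨y, hy, hyz⟩ := exists_mem_closedBall_p_pos hr hz hzs
    calc α * G.μ z ≤ G.p z y * G.μ z :=
          mul_le_mul_of_nonneg_right (hell z y (hrev.p_pos_symm hyz)) (G.μ_pos z).le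
      _ = G.p y z * G.μ y := hrev z y
      _ ≤ ∑ y ∈ s, G.p y z * G.μ y := Finset.single_le_sum (f := fun y => G.p y z * G.μ y)
          (fun y _ => mul_nonneg (G.p_nonneg y z) (G.μ_pos y).le) hy
  have htotal : α * ∑ z ∈ shell, G.μ z ≤ ∑ y ∈ s, G.μ y :=
    calc α * ∑ z ∈ shell, G.μ z ≤ ∑ z ∈ shell, ∑ y ∈ s, G.p y z * G.μ y := by
          rw [Finset.mul_sum]
          exact Finset.sum_le_sum hshell
      _ = ∑ y ∈ s, (∑ z ∈ shell, G.p y z) * G.μ y := by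
          rw [Finset.sum_comm]
          simp only [Finset.sum_mul]
      _ ≤ ∑ y ∈ s, G.μ y := Finset.sum_le_sum fun y _ => mul_le_of_le_one_left (G.μ_pos y).le
          (sum_le_hasSum shell (fun z _ => G.p_nonneg y z) (G.markov y))
  rw [ballMeasure_eq_sum, ballMeasure_eq_sum, ← Finset.sum_sdiff hsub, one_add_mul,
    one_div_mul_eq_div, add_comm, add_le_add_iff_left, le_div_iff₀' hα]
  exact htotal

lemma ballMeasure_add_natCast_le (hα : 0 < α) (hell : G.IsElliptic α) (hrev : G.IsReversible)
    (x : V) {r : ℝ} (hr : 0 ≤ r) (j : ℕ) :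
    G.ballMeasure x (r + j) ≤ (1 + 1 / α) ^ j * G.ballMeasure x r := by
  induction j with
  | zero => simp
  | succ j ih =>
    calc G.ballMeasure x (r + (j + 1 : ℕ)) = G.ballMeasure x (r + j + 1) := by
          rw [Nat.cast_add_one, add_assoc]
      _ ≤ (1 + 1 / α) * G.ballMeasure x (r + j) :=
          ballMeasure_add_one_le hα hell hrev x (by positivity)
      _ ≤ (1 + 1 / α) * ((1 + 1 / α) ^ j * G.ballMeasure x r) :=
          mul_le_mul_of_nonneg_left ih (by positivity)
      _ = (1 + 1 / α) ^ (j + 1) * G.ballMeasure x r := by ring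

end BoundedGeometry

/-! ### The Harnack inequality -/

section Harnack

variable {n N D : ℕ} {α τ m : ℝ} {u : V → ℝ} {x y : V}

/-- While the point of evaluation moves from `x` towards `y`, the term `Γ u ≥ α / 2 (u y - u x)²`
of the equation pays, up to `δ² / (2 α τ)`, for the change of `u` along the edge. -/
lemma sub_le_interpolate_eulerStep (hell : G.IsElliptic α) (hrev : G.IsReversible) (hα : 0 < α)
    (hτ : 0 < τ) (hm : ∀ z, -m ≤ G.lap u z) (hxy : x = y ∨ 0 < G.p x y) {l δ : ℝ}
    (hl : 0 ≤ l + δ) (hl' : l + δ ≤ 1) :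
    (1 - l) * u x + l * u y - (τ * m + δ ^ 2 / (2 * α * τ)) ≤
      (1 - (l + δ)) * G.eulerStep τ u x + (l + δ) * G.eulerStep τ u y := by
  have hyx : y = x ∨ 0 < G.p y x := hxy.imp Eq.symm hrev.p_pos_symm
  have hstep : ∀ {z z' : V}, (z = z' ∨ 0 < G.p z z') →
      u z + τ * (α / 2 * (u z' - u z) ^ 2 - m) ≤ G.eulerStep τ u z := fun {z _} hzz' => by
    rw [eulerStep_apply]
    gcongr
    linarith [hell.mul_sq_le_two_mul_gamma u hzz', hm z]
  have hx := mul_le_mul_of_nonneg_left (hstep hxy) (sub_nonneg.mpr hl')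
  have hy := mul_le_mul_of_nonneg_left (hstep hyx) hl
  have hsquare : 0 ≤ τ * (α / 2 * (u y - u x) ^ 2) + δ * (u y - u x) + δ ^ 2 / (2 * α * τ) :=
    calc 0 ≤ α * τ / 2 * (u y - u x + δ / (α * τ)) ^ 2 := by positivity
      _ = τ * (α / 2 * (u y - u x) ^ 2) + δ * (u y - u x) + δ ^ 2 / (2 * α * τ) := by
        field_simp
        ring
  linarith

lemma sub_le_flow_of_edge (hell : G.IsElliptic α) (hrev : G.IsReversible) (hα : 0 < α)
    (hτ : 0 < τ) (hN : 0 < N) (hm : ∀ k < N, ∀ z, -m ≤ G.lap (G.flow τ u k) z)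
    (hxy : x = y ∨ 0 < G.p x y) :
    u x - (m * (τ * N) + 1 / (2 * α * (τ * N))) ≤ G.flow τ u N y := by
  have hN' : (0 : ℝ) < N := Nat.cast_pos.mpr hN
  have hinterpolate : ∀ j ≤ N, u x - j * (τ * m + (1 / N) ^ 2 / (2 * α * τ)) ≤
      (1 - j / N) * G.flow τ u j x + j / N * G.flow τ u j y := by
    intro j
    induction j with
    | zero => simp [flow_zero]
    | succ j ih =>
      intro hj
      have hj' : (j : ℝ) / N + 1 / N ≤ 1 := by
        rw [← add_div, div_le_one hN']
        exact_mod_cast hj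
      have hstep := sub_le_interpolate_eulerStep hell hrev hα hτ (hm j hj) hxy
        (l := j / N) (δ := 1 / N) (by positivity) hj'
      rw [flow_succ, Nat.cast_add_one, add_div]
      linarith [ih (Nat.le_of_succ_le hj)]
  have hend := hinterpolate N le_rfl
  rw [div_self hN'.ne', sub_self, zero_mul, one_mul, zero_add] at hend
  convert hend using 2
  field_simp

lemma sub_le_flow_of_dist_le (hell : G.IsElliptic α) (hrev : G.IsReversible) (hα : 0 < α)
    (hτ : 0 < τ) (hN : 0 < N) (hm : ∀ k < D * N, ∀ z, -m ≤ G.lap (G.flow τ u k) z)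
    (hxy : G.dist x y ≤ D) :
    u x - D * (m * (τ * N) + 1 / (2 * α * (τ * N))) ≤ G.flow τ u (D * N) y := by
  induction D generalizing y with
  | zero => simp [eq_of_dist_le_zero hxy, flow_zero]
  | succ D ih =>
    obtain ⟨z, hxz, hzy⟩ := exists_dist_le_of_dist_le_succ hxy
    rw [Nat.succ_mul] at hm ⊢
    have hz := ih (fun k hk => hm k (by omega)) hxz
    have hzy := sub_le_flow_of_edge (u := G.flow τ u (D * N)) hell hrev hα hτ hN
      (fun k hk => flow_flow (G := G) k ▸ hm _ (by omega)) hzy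
    rw [flow_flow, add_comm N] at hzy
    push_cast
    linarith

/-- Along the flow `Δ u ≥ -n / (2 T)` after time `T` by the Li–Yau inequality, so that the first
term of the Harnack cost over a further time `T` is `n / 2`. -/
lemma CD.harnack_flow (hCD : G.CD 0 n) (hn : 0 < n) (hell : G.IsElliptic α)
    (hrev : G.IsReversible) (hα : 0 < α) (hτ : 0 < τ) (hτ' : τ ≤ 1 / 4) (hD : 0 < D) (hN : 0 < N)
    (hu : ∀ j ≤ 2 * (D * N), G.EdgeLipschitz (1 / 2) (G.flow τ u j)) (hxy : G.dist x y ≤ D) :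
    G.flow τ u (D * N) x - (n / 2 + D ^ 2 / (2 * α * (τ * (D * N : ℕ)))) ≤
      G.flow τ u (2 * (D * N)) y := by
  have hli_yau : ∀ k < D * N, ∀ z,
      -(n / (2 * (τ * (D * N : ℕ)))) ≤ G.lap (G.flow τ (G.flow τ u (D * N)) k) z := by
    intro k hk z
    rw [flow_flow]
    refine le_trans (neg_le_neg ?_) (hCD.li_yau_flow hn hτ hτ'
      (Nat.add_pos_right k (Nat.mul_pos hD hN)) (fun j hj => hu j (by omega)) z)
    gcongr
    exact Nat.le_add_left _ _
  have hspread := sub_le_flow_of_dist_le hell hrev hα hτ hN hli_yau hxy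
  rw [flow_flow, ← two_mul] at hspread
  convert hspread using 2
  push_cast
  field_simp

end Harnack

/-! ### Large radii -/

/-- The tent of slope `ε` over the ball of radius `R` around `x`. -/
noncomputable def tent (G : WeightedGraph V) (x : V) (R ε : ℝ) : V → ℝ :=
  fun y => ε * max 0 (R - G.dist x y)

section Tent

variable {x y : V} {R ε : ℝ}

lemma tent_nonneg (hε : 0 ≤ ε) : 0 ≤ G.tent x R ε := fun _ =>
  mul_nonneg hε (le_max_left _ _)

lemma tent_le (hR : 0 ≤ R) (hε : 0 ≤ ε) (y : V) : G.tent x R ε y ≤ ε * R :=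
  mul_le_mul_of_nonneg_left (max_le hR (sub_le_self R (Nat.cast_nonneg _))) hε

lemma tent_self (hR : 0 ≤ R) : G.tent x R ε x = ε * R := by
  simp [tent, dist_self_eq_zero, hR]

lemma tent_eq_zero (hy : y ∉ G.closedBall x R) : G.tent x R ε y = 0 := by
  rw [mem_closedBall, not_le] at hy
  simp [tent, hy.le]

lemma IsReversible.edgeLipschitz_tent (hrev : G.IsReversible) (hε : 0 ≤ ε) :
    G.EdgeLipschitz ε (G.tent x R ε) := by
  intro y z hyz
  have hz : (G.dist x z : ℝ) ≤ G.dist x y + 1 := by exact_mod_cast dist_le_dist_add_one x hyz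
  have hy : (G.dist x y : ℝ) ≤ G.dist x z + 1 := by
    exact_mod_cast dist_le_dist_add_one x (hrev.p_pos_symm hyz)
  have hone : |max 0 (R - G.dist x z) - max 0 (R - G.dist x y)| ≤ 1 := by
    rw [max_comm 0, max_comm 0]
    refine (abs_max_sub_max_le_abs _ _ _).trans (abs_sub_le_iff.mpr ⟨?_, ?_⟩) <;> linarith
  simp only [tent]
  rw [← mul_sub, abs_mul, abs_of_nonneg hε]
  exact mul_le_of_le_one_right hε hone

end Tent

section LargeRadii

variable {n N D j k : ℕ} {α τ ε : ℝ} {u : V → ℝ} {x y : V}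

lemma CD.edgeLipschitz_flow_of_edgeLipschitz (hCD : G.CD 0 n) (hn : 0 < n)
    (hell : G.IsElliptic α) (hα : 0 < α) (hτ : 0 ≤ τ) (hτ' : τ ≤ 2 / 3) (hε : ε ^ 2 ≤ α / 8)
    (hu : G.EdgeLipschitz ε u) (hk : 8 * τ ^ 2 * k ≤ ε ^ 2) (hjk : j ≤ k) :
    G.EdgeLipschitz (1 / 2) (G.flow τ u j) := by
  have hj : 8 * τ ^ 2 * j ≤ ε ^ 2 := le_trans (by gcongr) hk
  exact hCD.edgeLipschitz_flow hn hell hα hτ hτ' hu.gamma_le (by linarith)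

lemma CD.sub_sqrt_le_flow_of_edgeLipschitz (hCD : G.CD 0 n) (hn : 0 < n) (hell : G.IsElliptic α)
    (hα : 0 < α) (hτ : 0 < τ) (hτ' : τ ≤ 2 / 3) (hε : 0 ≤ ε) (hε' : ε ^ 2 ≤ α / 8)
    (hu : G.EdgeLipschitz ε u) (hk : 8 * τ ^ 2 * k ≤ ε ^ 2) (hj : 0 < j) (hjk : j ≤ k) (x : V) :
    u x - τ * ε - ε * √(2 * n * (τ * j)) ≤ G.flow τ u j x := by
  obtain ⟨l, rfl⟩ := Nat.exists_eq_add_one_of_ne_zero hj.ne'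
  have hF : ∀ i ≤ l, G.gradientFunctional n (τ * i) (G.flow τ u i) x ≤ ε ^ 2 := by
    intro i hi
    have hik : i ≤ k := by omega
    have hτi : 8 * τ ^ 2 * i ≤ ε ^ 2 := le_trans (by gcongr) hk
    exact (hCD.gradientFunctional_flow_le hn hell hα hτ.le hτ' hu.gamma_le (by linarith) x).trans
      (by linarith)
  refine le_trans ?_ (sub_sqrt_le_flow hn hτ hε hu hF)
  gcongr
  exact l.le_succ

/-- The flow runs for time `T` to smooth `u`, then for time `T` to spread its value at `x` over
the ball of radius `D`. -/
lemma CD.sub_le_flow_of_edgeLipschitz (hCD : G.CD 0 n) (hn : 0 < n) (hell : G.IsElliptic α)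
    (hrev : G.IsReversible) (hα : 0 < α) (hτ : 0 < τ) (hτ' : τ ≤ 1 / 4) (hε : 0 ≤ ε)
    (hε' : ε ^ 2 ≤ α / 8) (hu : G.EdgeLipschitz ε u) (hD : 0 < D) (hN : 0 < N) {T : ℝ}
    (hT : τ * (D * N : ℕ) = T) (hk : 8 * τ ^ 2 * (2 * (D * N) : ℕ) ≤ ε ^ 2)
    (hxy : G.dist x y ≤ D) :
    u x - τ * ε - ε * √(2 * n * T) - (n / 2 + D ^ 2 / (2 * α * T)) ≤
      G.flow τ u (2 * (D * N)) y := by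
  have hstep : τ ≤ 2 / 3 := hτ'.trans (by norm_num)
  have hcentre := hCD.sub_sqrt_le_flow_of_edgeLipschitz hn hell hα hτ hstep hε hε' hu hk
    (Nat.mul_pos hD hN) (Nat.le_mul_of_pos_left _ two_pos) x
  have hspread := hCD.harnack_flow (u := u) hn hell hrev hα hτ hτ' hD hN
    (fun j hj => hCD.edgeLipschitz_flow_of_edgeLipschitz hn hell hα hτ.le hstep hε' hu hk hj) hxy
  rw [hT] at hcentre hspread
  linarith

lemma exists_step_size {T δ : ℝ} (hT : 0 < T) (hδ : 0 < δ) (hD : 0 < D) :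
    ∃ (N : ℕ) (τ : ℝ), 0 < N ∧ 0 < τ ∧ τ ≤ δ ∧ τ * (D * N : ℕ) = T := by
  obtain ⟨N, hN⟩ := exists_nat_gt (T / δ)
  have hN' : (0 : ℝ) < N := (div_pos hT hδ).trans hN
  have hDN : (N : ℝ) ≤ (D * N : ℕ) := by exact_mod_cast Nat.le_mul_of_pos_left N hD
  have hDN' : (0 : ℝ) < (D * N : ℕ) := hN'.trans_le hDN
  refine ⟨N, T / (D * N : ℕ), Nat.cast_pos.mp hN', div_pos hT hDN', ?_,
    div_mul_cancel₀ T hDN'.ne'⟩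
  rw [div_le_comm₀ hDN' hδ]
  exact hN.le.trans hDN

lemma IsReversible.sum_le_of_half_le_flow (hrev : G.IsReversible) (hτ : 0 ≤ τ)
    (hτ' : τ ≤ 1 / 25) {M : ℝ} {s t : Finset V} (hu : 0 ≤ u) (huM : ∀ y, u y ≤ M)
    (hut : ∀ y, y ∉ t → u y = 0)
    (hlip : ∀ j < k, G.EdgeLipschitz (1 / 2) (G.flow τ u j))
    (hs : ∀ y ∈ s, 1 / 2 ≤ G.flow τ u k y) :
    ∑ y ∈ s, G.μ y ≤ Real.exp (3 * M) * ∑ y ∈ t, G.μ y := by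
  have hfin : u.HasFiniteSupport :=
    t.finite_toSet.subset fun y hy => not_not.mp (mt (hut y) hy)
  calc ∑ y ∈ s, G.μ y ≤ G.expMass (G.flow τ u k) :=
        sum_le_expMass (hrev.hasFiniteSupport_flow τ hfin k)
          (flow_nonneg hτ (hτ'.trans (by norm_num)) hu k) hs
    _ ≤ G.expMass u := hrev.expMass_flow_le hτ hτ' hfin hlip
    _ ≤ Real.exp (3 * M) * ∑ y ∈ t, G.μ y := expMass_le huM hut

lemma CD.half_le_flow_tent (hCD : G.CD 0 n) (hn : 0 < n) (hell : G.IsElliptic α)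
    (hrev : G.IsReversible) (hα : 0 < α) {R : ℝ} (hτ : 0 < τ) (hτ' : τ ≤ 1 / 4) (hε : 0 ≤ ε)
    (hε' : ε ^ 2 ≤ α / 8) (hετ : τ * ε ≤ 1) (hR : 0 < R) (hεR : 3 + n + 32 * n / α ≤ ε * R)
    (hD : 0 < D) (hDR : D ≤ 2 * R) (hN : 0 < N) (hT : τ * (D * N : ℕ) = R ^ 2 / (8 * n))
    (hk : 8 * τ ^ 2 * (2 * (D * N) : ℕ) ≤ ε ^ 2) (hxy : G.dist x y ≤ D) :
    1 / 2 ≤ G.flow τ (G.tent x R ε) (2 * (D * N)) y := by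
  have hspread := hCD.sub_le_flow_of_edgeLipschitz hn hell hrev hα hτ hτ' hε hε'
    (hrev.edgeLipschitz_tent (x := x) (R := R) hε) hD hN hT hk hxy
  have hdrop : √(2 * n * (R ^ 2 / (8 * n))) = R / 2 := by
    rw [← Real.sqrt_sq (half_pos hR).le]
    congr 1
    field_simp
    norm_num
  have hcost : (D : ℝ) ^ 2 / (2 * α * (R ^ 2 / (8 * n))) ≤ 16 * n / α :=
    calc (D : ℝ) ^ 2 / (2 * α * (R ^ 2 / (8 * n)))
        ≤ (2 * R) ^ 2 / (2 * α * (R ^ 2 / (8 * n))) := by gcongr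
      _ = 16 * n / α := by
        field_simp
        norm_num
  have hhalf : 32 * n / α = 2 * (16 * n / α) := by ring
  rw [tent_self hR.le, hdrop] at hspread
  rw [hhalf] at hεR
  linarith

lemma CD.exists_half_le_flow_tent (hCD : G.CD 0 n) (hn : 0 < n) (hell : G.IsElliptic α)
    (hrev : G.IsReversible) (hα : 0 < α) {R : ℝ} (hε : 0 < ε) (hε' : ε ^ 2 ≤ α / 8)
    (hεR : 3 + n + 32 * n / α ≤ ε * R) (x : V) :
    ∃ (τ : ℝ) (k : ℕ), 0 ≤ τ ∧ τ ≤ 1 / 25 ∧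
      (∀ j < k, G.EdgeLipschitz (1 / 2) (G.flow τ (G.tent x R ε) j)) ∧
      ∀ y ∈ G.closedBall x (2 * R), 1 / 2 ≤ G.flow τ (G.tent x R ε) k y := by
  have : Nonempty V := ⟨x⟩
  have hε1 : ε ≤ 1 := by
    rw [← sq_le_one_iff₀ hε.le]
    linarith [hell.le_one]
  have hεR3 : 3 ≤ ε * R := by
    linarith [show 0 ≤ n + 32 * n / α by positivity]
  have hR0 : 0 < R := pos_of_mul_pos_right (zero_lt_three.trans_le hεR3) hε.le
  have hR : 3 ≤ R := hεR3.trans (mul_le_of_le_one_left hR0.le hε1)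
  have hT : 0 < R ^ 2 / (8 * n) := by positivity
  have hD : 0 < ⌊2 * R⌋₊ := Nat.floor_pos.mpr (by linarith)
  obtain ⟨N, τ, hN, hτ, hτδ, hτN⟩ := exists_step_size hT
    (show 0 < min (1 / 25) (ε ^ 2 / (16 * (R ^ 2 / (8 * n)))) by positivity) hD
  obtain ⟨hτ25, hτT⟩ := le_min_iff.mp hτδ
  have hsteps : 8 * τ ^ 2 * (2 * (⌊2 * R⌋₊ * N) : ℕ) ≤ ε ^ 2 :=
    calc 8 * τ ^ 2 * (2 * (⌊2 * R⌋₊ * N) : ℕ) = τ * (16 * (τ * (⌊2 * R⌋₊ * N : ℕ))) := by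
          push_cast
          ring
      _ = τ * (16 * (R ^ 2 / (8 * n))) := by rw [hτN]
      _ ≤ ε ^ 2 := (le_div_iff₀ (by positivity)).mp hτT
  refine ⟨τ, 2 * (⌊2 * R⌋₊ * N), hτ.le, hτ25, fun j hj => ?_, fun y hy => ?_⟩
  · exact hCD.edgeLipschitz_flow_of_edgeLipschitz hn hell hα hτ.le (hτ25.trans (by norm_num)) hε'
      (hrev.edgeLipschitz_tent hε.le) hsteps hj.le
  · exact hCD.half_le_flow_tent hn hell hrev hα hτ (hτ25.trans (by norm_num)) hε.le hε'
      (mul_le_one₀ (hτ25.trans (by norm_num)) hε.le hε1) hR0 hεR hD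
      (Nat.floor_le (by positivity)) hN hτN hsteps (Nat.le_floor (mem_closedBall.mp hy))

lemma CD.ballMeasure_two_mul_le (hCD : G.CD 0 n) (hn : 0 < n) (hell : G.IsElliptic α)
    (hrev : G.IsReversible) (hα : 0 < α) {R : ℝ} (hε : 0 < ε) (hε' : ε ^ 2 ≤ α / 8)
    (hR : 0 ≤ R) (hεR : 3 + n + 32 * n / α ≤ ε * R) (x : V) :
    G.ballMeasure x (2 * R) ≤ Real.exp (3 * (ε * R)) * G.ballMeasure x R := by
  obtain ⟨τ, k, hτ, hτ', hlip, hhalf⟩ :=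
    hCD.exists_half_le_flow_tent hn hell hrev hα hε hε' hεR x
  rw [ballMeasure_eq_sum, ballMeasure_eq_sum]
  exact hrev.sum_le_of_half_le_flow hτ hτ' (tent_nonneg hε.le) (tent_le hR hε.le)
    (fun _ => tent_eq_zero) hlip hhalf

end LargeRadii

end WeightedGraph

/-- If a weighted graph with bounded geometry (constant `α > 0`)
satisfies `CD(0,n)` for a positive integer `n`, then the doubling volume property
holds, with a constant depending only on `n` and `α`. -/
theorem doubling_volume_of_CD_zero_n (n : ℕ) (hn : 0 < n) (α : ℝ) (hα : 0 < α) :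
    ∃ C_DV : ℝ, 0 < C_DV ∧
      ∀ (V : Type) [Countable V] (G : WeightedGraph V),
        G.BoundedGeometry α → G.CD 0 n →
          ∀ x : V, ∀ r : ℝ, 0 < r →
            G.ballMeasure x (2 * r) ≤ C_DV * G.ballMeasure x r := by
  set M : ℝ := 3 + n + 32 * n / α
  set R₀ : ℝ := √(8 / α) * M
  have hM : 0 < M := by positivity
  refine ⟨max (Real.exp (3 * M)) ((1 + 1 / α) ^ ⌈R₀⌉₊), lt_max_of_lt_left (Real.exp_pos _), ?_⟩
  intro V _ G ⟨_, hell, hrev⟩ hCD x r hr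
  rcases le_total R₀ r with hlarge | hsmall
  · have hslope : (M / r) ^ 2 ≤ α / 8 := by
      have hsq : R₀ ^ 2 ≤ r ^ 2 := pow_le_pow_left₀ (by positivity) hlarge 2
      rw [mul_pow, Real.sq_sqrt (by positivity), div_mul_eq_mul_div, div_le_iff₀ hα] at hsq
      rw [div_pow, div_le_iff₀ (by positivity)]
      linarith
    have hheight : M / r * r = M := div_mul_cancel₀ M hr.ne'
    have hdoubling := hCD.ballMeasure_two_mul_le hn hell hrev hα (div_pos hM hr) hslope hr.le
      hheight.ge x
    rw [hheight] at hdoubling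
    exact hdoubling.trans (mul_le_mul_of_nonneg_right (le_max_left _ _)
      (WeightedGraph.ballMeasure_nonneg x r))
  · calc G.ballMeasure x (2 * r) ≤ G.ballMeasure x (r + ⌈R₀⌉₊) :=
          WeightedGraph.ballMeasure_mono x (by linarith [Nat.le_ceil R₀])
      _ ≤ (1 + 1 / α) ^ ⌈R₀⌉₊ * G.ballMeasure x r :=
          WeightedGraph.ballMeasure_add_natCast_le hα hell hrev x hr.le _
      _ ≤ _ := mul_le_mul_of_nonneg_right (le_max_right _ _)
          (WeightedGraph.ballMeasure_nonneg x r)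
end

section
/- Let G=(V,p,μ) be a weighted graph with bounded geometry satisfying CD(K,∞) for some K≥0. Then for every bounded function f:V→ℝ, every t>0 and every x∈V, Γ(P_t f)(x) ≤ e^{−2Kt}·P_t(Γf)(x). -/
namespace WeightedGraph

/-- The heat semigroup `P_t = e^{tΔ} = ∑_{k ≥ 0} t^k Δ^k / k!`, applied pointwise. -/
noncomputable def heatSem {V : Type*} (G : WeightedGraph V) (t : ℝ) (f : V → ℝ) (x : V) : ℝ :=
  ∑' k : ℕ, t ^ k / (Nat.factorial k : ℝ) * ((G.lap)^[k] f) x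

end WeightedGraph

/-!
Write `P_s = exp (s Δ)`. Along the interpolation `s ↦ P_s (Γ (P_{t-s} f))`, which runs from
`Γ (P_t f)` at `s = 0` to `P_t (Γ f)` at `s = t`, the derivative is `2 P_s (Γ₂ (P_{t-s} f))`. Since
`P_s` preserves positivity, `CD(K, ∞)` bounds this below by `2 K P_s (Γ (P_{t-s} f))`, and the
estimate follows from Grönwall's inequality. All of this happens in the Banach algebra of bounded
functions, where `Δ` is a bounded operator; `P_s = e^{-s} exp (s (Δ + 1))` is positive because
`Δ + 1` is averaging against the kernel `p`.
-/

open NormedSpace (exp)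
open BoundedContinuousFunction Set

section ExpSemigroup

variable {E : Type*} [NormedAddCommGroup E] [NormedSpace ℝ E]

/-- The semigroup `e^{tL}` generated by a bounded operator `L`, as the exponential in the Banach
algebra of bounded operators; for the Laplacian it is the heat semigroup `P_t`. -/
noncomputable def expSemigroup (L : E →L[ℝ] E) (t : ℝ) : E →L[ℝ] E := exp (t • L)

lemma expSemigroup_zero (L : E →L[ℝ] E) : expSemigroup L 0 = 1 := by
  rw [expSemigroup, zero_smul, NormedSpace.exp_zero]

variable [CompleteSpace E]

lemma expSemigroup_sub_one (L : E →L[ℝ] E) (s : ℝ) :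
    expSemigroup (L - 1) s = Real.exp (-s) • expSemigroup L s := by
  have hsplit : s • (L - 1) = algebraMap ℝ (E →L[ℝ] E) (-s) + s • L := by
    rw [smul_sub, Algebra.algebraMap_eq_smul_one, neg_smul, sub_eq_neg_add]
  let _ : NormedAlgebra ℚ (E →L[ℝ] E) := NormedAlgebra.restrictScalars ℚ ℝ (E →L[ℝ] E)
  rw [expSemigroup, hsplit, NormedSpace.exp_add_of_commute (Algebra.commutes _ _),
    ← NormedSpace.algebraMap_exp_comm, ← Real.exp_eq_exp_ℝ, ← Algebra.smul_def, expSemigroup]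

lemma hasSum_expSemigroup_apply (L : E →L[ℝ] E) (s : ℝ) (f : E) :
    HasSum (fun k : ℕ => (s ^ k / (k.factorial : ℝ)) • L^[k] f) (expSemigroup L s f) := by
  have hseries := (NormedSpace.exp_series_hasSum_exp' (𝕂 := ℝ) (s • L)).mapL
    (ContinuousLinearMap.apply ℝ E f)
  refine hseries.congr_fun fun k => ?_
  simp [smul_pow, smul_smul, div_eq_inv_mul]

lemma hasDerivAt_expSemigroup_apply (L : E →L[ℝ] E) {u : ℝ → E} {u' : E} {s : ℝ}
    (hu : HasDerivAt u u' s) :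
    HasDerivAt (fun r => expSemigroup L r (u r)) (expSemigroup L s (L (u s) + u')) s := by
  simpa [expSemigroup] using (hasDerivAt_exp_smul_const (𝕂 := ℝ) L s).clm_apply hu

lemma hasDerivAt_expSemigroup_const_sub_apply (L : E →L[ℝ] E) (f : E) (t s : ℝ) :
    HasDerivAt (fun r => expSemigroup L (t - r) f) (-L (expSemigroup L (t - s) f)) s := by
  have hexp := (hasDerivAt_exp_smul_const' (𝕂 := ℝ) L (t - s)).clm_apply
    (hasDerivAt_const (t - s) f)
  simpa [expSemigroup, Function.comp_def] using hexp.scomp s ((hasDerivAt_id s).const_sub t)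

lemma expSemigroup_apply_nonneg [PartialOrder E] [IsOrderedAddMonoid E] [OrderClosedTopology E]
    [PosSMulMono ℝ E] {M : E →L[ℝ] E} (hM : ∀ f, 0 ≤ f → 0 ≤ M f) {s : ℝ} (hs : 0 ≤ s)
    {f : E} (hf : 0 ≤ f) : 0 ≤ expSemigroup M s f := by
  refine (hasSum_expSemigroup_apply M s f).nonneg fun k => smul_nonneg (by positivity) ?_
  exact MapsTo.iterate (s := {g | 0 ≤ g}) hM k hf

end ExpSemigroup

lemma le_exp_mul_of_mul_le_deriv {φ φ' : ℝ → ℝ} {c t : ℝ} (ht : 0 ≤ t)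
    (hφ : ∀ s ∈ Icc 0 t, HasDerivAt φ (φ' s) s) (hle : ∀ s ∈ Ioo 0 t, c * φ s ≤ φ' s) :
    φ 0 ≤ Real.exp (-c * t) * φ t := by
  have hderiv (s : ℝ) (hs : s ∈ Icc 0 t) : HasDerivAt (fun r => Real.exp (-c * r) * φ r)
      (Real.exp (-c * s) * (φ' s - c * φ s)) s := by
    refine (((hasDerivAt_id s).const_mul (-c)).exp.mul (hφ s hs)).congr_deriv ?_
    simp only [id]
    ring
  have hmono : MonotoneOn (fun r => Real.exp (-c * r) * φ r) (Icc 0 t) := by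
    refine monotoneOn_of_hasDerivWithinAt_nonneg (convex_Icc 0 t)
      (fun s hs => (hderiv s hs).continuousAt.continuousWithinAt)
      (fun s hs => (hderiv s (interior_subset hs)).hasDerivWithinAt) fun s hs => ?_
    rw [interior_Icc] at hs
    exact mul_nonneg (Real.exp_pos _).le (sub_nonneg.2 (hle s hs))
  simpa using hmono (left_mem_Icc.2 ht) (right_mem_Icc.2 ht) ht

section CarreDuChamp

variable {A : Type*} [NormedCommRing A] [NormedAlgebra ℝ A]

/-- The carré du champ `Γ(f, g) = (1/2) (L (f g) - f L g - g L f)` of a bounded operator `L` on a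
commutative normed algebra, which measures the failure of `L` to be a derivation. -/
noncomputable def carreDuChamp (L : A →L[ℝ] A) (f g : A) : A :=
  (1 / 2 : ℝ) • (L (f * g) - f * L g - g * L f)

/-- The iterated carré du champ `Γ₂ f = (1/2) L (Γ(f, f)) - Γ(f, L f)` of a bounded operator `L`,
whose lower bounds by multiples of `Γ(f, f)` are the curvature conditions of Bakry and Émery. -/
noncomputable def iteratedCarreDuChamp (L : A →L[ℝ] A) (f : A) : A :=
  (1 / 2 : ℝ) • L (carreDuChamp L f f) - carreDuChamp L f (L f)

variable (L : A →L[ℝ] A)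

lemma hasDerivAt_carreDuChamp_self {u : ℝ → A} {u' : A} {s : ℝ} (hu : HasDerivAt u u' s) :
    HasDerivAt (fun r => carreDuChamp L (u r) (u r)) ((2 : ℝ) • carreDuChamp L (u s) u') s := by
  have hLu := L.hasFDerivAt.comp_hasDerivAt s hu
  have hLuu := L.hasFDerivAt.comp_hasDerivAt s (hu.mul hu)
  refine (((hLuu.sub (hu.mul hLu)).sub (hu.mul hLu)).const_smul (1 / 2 : ℝ)).congr_deriv ?_
  simp only [carreDuChamp, map_add, mul_comm u', Function.comp_apply]
  module

variable [CompleteSpace A]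

lemma hasDerivAt_expSemigroup_carreDuChamp (f : A) (t s : ℝ) :
    HasDerivAt
      (fun r => expSemigroup L r
        (carreDuChamp L (expSemigroup L (t - r) f) (expSemigroup L (t - r) f)))
      ((2 : ℝ) • expSemigroup L s (iteratedCarreDuChamp L (expSemigroup L (t - s) f))) s := by
  have hΓ := hasDerivAt_carreDuChamp_self L (hasDerivAt_expSemigroup_const_sub_apply L f t s)
  refine (hasDerivAt_expSemigroup_apply L hΓ).congr_deriv ?_
  rw [← map_smul]
  congr 1
  simp only [iteratedCarreDuChamp, carreDuChamp, map_neg, mul_neg, neg_mul]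
  module

theorem carreDuChamp_expSemigroup_le (l : A →L[ℝ] ℝ) {K t : ℝ} (ht : 0 ≤ t)
    (hcurv : ∀ s : ℝ, 0 ≤ s → ∀ g,
      K * l (expSemigroup L s (carreDuChamp L g g)) ≤
        l (expSemigroup L s (iteratedCarreDuChamp L g)))
    (f : A) :
    l (carreDuChamp L (expSemigroup L t f) (expSemigroup L t f)) ≤
      Real.exp (-2 * K * t) * l (expSemigroup L t (carreDuChamp L f f)) := by
  have hgronwall := le_exp_mul_of_mul_le_deriv (c := 2 * K) ht
    (fun s _ => l.hasFDerivAt.comp_hasDerivAt s (hasDerivAt_expSemigroup_carreDuChamp L f t s))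
    fun s hs => by
      have hcurv_s := hcurv s hs.1.le (expSemigroup L (t - s) f)
      simp only [Function.comp_apply, map_smul, smul_eq_mul]
      linarith
  simpa [expSemigroup_zero] using hgronwall

end CarreDuChamp

instance {X β : Type*} [TopologicalSpace X] [NormedAddCommGroup β] [NormedSpace ℝ β] [Lattice β]
    [HasSolidNorm β] [IsOrderedAddMonoid β] [PosSMulMono ℝ β] : PosSMulMono ℝ (X →ᵇ β) :=
  ⟨fun _ hc _ _ hfg x => smul_le_smul_of_nonneg_left (hfg x) hc⟩

namespace WeightedGraph

variable {V : Type*} (G : WeightedGraph V)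

/-- The Markov operator `f ↦ ∑_y p(x, y) f(y)` of averaging over neighbours, of which the Laplacian
is the difference with the identity. -/
noncomputable def markovOp (f : V → ℝ) (x : V) : ℝ := ∑' y, G.p x y * f y

lemma hasSum_markovOp (f : V → ℝ) (x : V) : HasSum (fun y => G.p x y * f y) (G.markovOp f x) := by
  refine (summable_of_hasFiniteSupport ((G.locallyFinite x).subset fun y hy => ?_)).hasSum
  exact (G.p_nonneg x y).lt_of_ne' (left_ne_zero_of_mul hy)

lemma markovOp_mono {f g : V → ℝ} (hfg : f ≤ g) : G.markovOp f ≤ G.markovOp g := fun x =>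
  hasSum_le (fun y => mul_le_mul_of_nonneg_left (hfg y) (G.p_nonneg x y))
    (G.hasSum_markovOp f x) (G.hasSum_markovOp g x)

lemma markovOp_const (c : ℝ) (x : V) : G.markovOp (fun _ => c) x = c := by
  simpa using (G.hasSum_markovOp _ x).unique ((G.markov x).mul_right c)

lemma abs_markovOp_le {f : V → ℝ} {C : ℝ} (hf : ∀ y, |f y| ≤ C) (x : V) :
    |G.markovOp f x| ≤ C := by
  have hlower := G.markovOp_mono (f := fun _ => -C) (fun y => (abs_le.1 (hf y)).1) x
  have hupper := G.markovOp_mono (g := fun _ => C) (fun y => (abs_le.1 (hf y)).2) x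
  rw [markovOp_const] at hlower hupper
  exact abs_le.2 ⟨hlower, hupper⟩

lemma hasSum_lap (f : V → ℝ) (x : V) : HasSum (fun y => G.p x y * (f y - f x)) (G.lap f x) :=
  (G.hasSum_markovOp (fun y => f y - f x) x).summable.hasSum

lemma lap_eq_markovOp_sub (f : V → ℝ) (x : V) : G.lap f x = G.markovOp f x - f x := by
  have hdiff := (G.hasSum_markovOp f x).sub ((G.markov x).mul_right (f x))
  simp only [one_mul, ← mul_sub] at hdiff
  exact hdiff.tsum_eq

lemma gammaBil_eq_lap (f g : V → ℝ) (x : V) :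
    G.gammaBil f g x = 1 / 2 * (G.lap (f * g) x - f x * G.lap g x - g x * G.lap f x) := by
  have hsum := ((G.hasSum_lap (f * g) x).sub ((G.hasSum_lap g x).mul_left (f x))).sub
    ((G.hasSum_lap f x).mul_left (g x))
  rw [gammaBil, ← hsum.tsum_eq]
  congr! 3 with y
  simp only [Pi.mul_apply]
  ring

lemma gamma_eq_gammaBil (f : V → ℝ) : G.gamma f = G.gammaBil f f := by
  ext x
  simp only [gamma, gammaBil, sq, mul_assoc]

variable [TopologicalSpace V] [DiscreteTopology V]

/-- The Markov operator on the Banach space of bounded functions. The vertex set carries the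
discrete topology, so that `V →ᵇ ℝ` is `L^∞(V, μ)`. -/
noncomputable def markovCLM : (V →ᵇ ℝ) →L[ℝ] (V →ᵇ ℝ) :=
  LinearMap.mkContinuous
    { toFun := fun f =>
        ofNormedAddCommGroupDiscrete (G.markovOp f) ‖f‖ (G.abs_markovOp_le f.norm_coe_le_norm)
      map_add' := fun f g => by
        ext x
        refine (G.hasSum_markovOp _ x).unique ?_
        simpa [mul_add] using (G.hasSum_markovOp f x).add (G.hasSum_markovOp g x)
      map_smul' := fun c f => by
        ext x
        refine (G.hasSum_markovOp _ x).unique ?_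
        simpa [mul_left_comm] using (G.hasSum_markovOp f x).mul_left c }
    1 fun f => by
      rw [one_mul, norm_le (norm_nonneg f)]
      exact G.abs_markovOp_le f.norm_coe_le_norm

lemma markovCLM_nonneg {f : V →ᵇ ℝ} (hf : 0 ≤ f) : 0 ≤ G.markovCLM f := fun x =>
  tsum_nonneg fun y => mul_nonneg (G.p_nonneg x y) (hf y)

/-- The Laplacian as a bounded operator on the Banach algebra of bounded functions, where the
exponential `P_t = e^{tΔ}` is defined. -/
noncomputable def lapCLM : (V →ᵇ ℝ) →L[ℝ] (V →ᵇ ℝ) := G.markovCLM - 1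

lemma coe_lapCLM (f : V →ᵇ ℝ) : ⇑(G.lapCLM f) = G.lap f :=
  funext fun x => (G.lap_eq_markovOp_sub f x).symm

lemma coe_lapCLM_iterate (k : ℕ) (f : V →ᵇ ℝ) : ⇑(G.lapCLM^[k] f) = G.lap^[k] f :=
  Function.Semiconj.iterate_right (f := fun g : V →ᵇ ℝ => ⇑g) G.coe_lapCLM k f

lemma coe_expSemigroup_lapCLM (t : ℝ) (f : V →ᵇ ℝ) :
    ⇑(expSemigroup G.lapCLM t f) = G.heatSem t f := by
  ext x
  have hseries := (hasSum_expSemigroup_apply G.lapCLM t f).mapL (evalCLM ℝ x)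
  simpa [coe_lapCLM_iterate, heatSem] using hseries.tsum_eq.symm

lemma expSemigroup_lapCLM_nonneg {s : ℝ} (hs : 0 ≤ s) {f : V →ᵇ ℝ} (hf : 0 ≤ f) :
    0 ≤ expSemigroup G.lapCLM s f := by
  rw [lapCLM, expSemigroup_sub_one]
  exact smul_nonneg (Real.exp_pos _).le
    (expSemigroup_apply_nonneg (fun _ => G.markovCLM_nonneg) hs hf)

lemma coe_carreDuChamp_lapCLM (f g : V →ᵇ ℝ) :
    ⇑(carreDuChamp G.lapCLM f g) = G.gammaBil f g := by
  ext x
  simp [carreDuChamp, gammaBil_eq_lap, coe_lapCLM]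

lemma coe_carreDuChamp_lapCLM_self (f : V →ᵇ ℝ) :
    ⇑(carreDuChamp G.lapCLM f f) = G.gamma f := by
  rw [coe_carreDuChamp_lapCLM, gamma_eq_gammaBil]

lemma coe_iteratedCarreDuChamp_lapCLM (f : V →ᵇ ℝ) :
    ⇑(iteratedCarreDuChamp G.lapCLM f) = G.gamma2 f := by
  ext x
  simp [iteratedCarreDuChamp, gamma2, coe_carreDuChamp_lapCLM, coe_lapCLM, gamma_eq_gammaBil]

lemma CDInfty.smul_carreDuChamp_le {G : WeightedGraph V} {K : ℝ} (hCD : G.CDInfty K)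
    (f : V →ᵇ ℝ) : K • carreDuChamp G.lapCLM f f ≤ iteratedCarreDuChamp G.lapCLM f := fun x => by
  simpa [coe_carreDuChamp_lapCLM_self, coe_iteratedCarreDuChamp_lapCLM] using hCD f x

lemma CDInfty.mul_expSemigroup_carreDuChamp_le {G : WeightedGraph V} {K : ℝ} (hCD : G.CDInfty K)
    {s : ℝ} (hs : 0 ≤ s) (f : V →ᵇ ℝ) (x : V) :
    K * expSemigroup G.lapCLM s (carreDuChamp G.lapCLM f f) x ≤
      expSemigroup G.lapCLM s (iteratedCarreDuChamp G.lapCLM f) x := by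
  have hpos := G.expSemigroup_lapCLM_nonneg hs (sub_nonneg.2 (hCD.smul_carreDuChamp_le f)) x
  simpa using hpos

end WeightedGraph

theorem gamma_heat_semigroup_CDinfty_general {V : Type*} (G : WeightedGraph V) (K : ℝ)
    (hCD : G.CDInfty K) (f : V → ℝ) (hf : BddAbove (range fun x => |f x|))
    (t : ℝ) (ht : 0 ≤ t) (x : V) :
    G.gamma (G.heatSem t f) x ≤ Real.exp (-2 * K * t) * G.heatSem t (G.gamma f) x := by
  let _ : TopologicalSpace V := ⊥
  have : DiscreteTopology V := ⟨rfl⟩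
  obtain ⟨C, hC⟩ := hf
  obtain ⟨F, rfl⟩ : ∃ F : V →ᵇ ℝ, ⇑F = f :=
    ⟨ofNormedAddCommGroupDiscrete f C fun y => hC ⟨y, rfl⟩, rfl⟩
  have hgradient := carreDuChamp_expSemigroup_le G.lapCLM (evalCLM ℝ x) ht
    (fun s hs g => hCD.mul_expSemigroup_carreDuChamp_le hs g x) F
  simpa only [evalCLM_apply, G.coe_carreDuChamp_lapCLM_self, G.coe_expSemigroup_lapCLM]
    using hgradient

/-- On a weighted graph with bounded geometry satisfying `CD(K,∞)`
with `K ≥ 0`, for every bounded `f`, `t > 0` and `x`,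
`Γ(P_t f)(x) ≤ e^{-2Kt} P_t(Γf)(x)`. -/
theorem gamma_heat_semigroup_CDinfty {V : Type*} [Countable V]
    (G : WeightedGraph V) (α K : ℝ) (hbg : G.BoundedGeometry α) (hK : 0 ≤ K)
    (hCD : G.CDInfty K) (f : V → ℝ) (hf : BddAbove (Set.range fun x => |f x|))
    (t : ℝ) (ht : 0 < t) (x : V) :
    G.gamma (G.heatSem t f) x ≤ Real.exp (-2 * K * t) * G.heatSem t (G.gamma f) x := by
  exact gamma_heat_semigroup_CDinfty_general G K hCD f hf t ht.le x
end
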